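/- arXiv:1906.05161 — 2 statements merged into one kernel-verified Lean document; each statement's English description precedes it below -/
import Mathlib

section
/- Let p > 2 and let w : [0,∞) → ℝ be continuous on [0,∞), twice continuously differentiable on (0,∞), with w(0) = 0 and −w''(s) = |w'(s)|^p for all s > 0. Then either w ≡ 0, or there exists α ≥ 0 such that w(s) = c_p ((α + s)^{1−β} − α^{1−β}) for all s ≥ 0. -/
open Set Metric Filter RealInnerProductSpace

noncomputable section

/-!
The derivative `v = w'` solves the autonomous first-order equation `v' = -|v| ^ p`, whose right-hand
side is locally Lipschitz, so `v` either vanishes identically or never vanishes. Wherever `v ≠ 0`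
the function `|v| ^ (1 - p)` is affine. A negative value of `v` would force this function to reach
zero in finite time, so a nonzero `v` is positive, with `v ^ (1 - p) = (p - 1) * (α + s)` for all
`s > 0`; positivity on the whole half-line gives `0 ≤ α`, and integrating `v` gives `w`. For `p < 2`
the value `α = 0` is impossible because `v` would not be integrable at `0`.
-/

open scoped Topology

section Antiderivative

variable {E : Type*} [NormedAddCommGroup E] [NormedSpace ℝ E] {f g f' : ℝ → E}

theorem exists_eqOn_add_const_of_hasDerivAt {s : Set ℝ} (hs : IsOpen s) (hs' : IsPreconnected s)
    (hf : ∀ x ∈ s, HasDerivAt f (f' x) x) (hg : ∀ x ∈ s, HasDerivAt g (f' x) x) :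
    ∃ C, EqOn f (g · + C) s :=
  hs.exists_eq_add_of_deriv_eq hs' (fun x hx ↦ (hf x hx).differentiableAt.differentiableWithinAt)
    (fun x hx ↦ (hg x hx).differentiableAt.differentiableWithinAt)
    (fun x hx ↦ (hf x hx).deriv.trans (hg x hx).deriv.symm)

theorem sub_eq_sub_of_hasDerivAt_Ioi {a x : ℝ} (hfc : ContinuousOn f (Ici a))
    (hgc : ContinuousOn g (Ici a)) (hf : ∀ x ∈ Ioi a, HasDerivAt f (f' x) x)
    (hg : ∀ x ∈ Ioi a, HasDerivAt g (f' x) x) (hx : a ≤ x) :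
    f x - f a = g x - g a := by
  obtain ⟨C, hC⟩ := exists_eqOn_add_const_of_hasDerivAt isOpen_Ioi isPreconnected_Ioi hf hg
  have hC_Ici : EqOn f (g · + C) (Ici a) :=
    hC.of_subset_closure hfc (hgc.add continuousOn_const) Ioi_subset_Ici_self (closure_Ioi a).ge
  rw [hC_Ici hx, hC_Ici self_mem_Ici, add_sub_add_right_eq_sub]

end Antiderivative

theorem eqOn_of_hasDerivAt_of_locallyLipschitz {E : Type*} [NormedAddCommGroup E]
    [NormedSpace ℝ E] {F : E → E} (hF : LocallyLipschitz F) {s : Set ℝ} (hs : s.OrdConnected)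
    {f g : ℝ → E} (hf : ∀ t ∈ s, HasDerivAt f (F (f t)) t)
    (hg : ∀ t ∈ s, HasDerivAt g (F (g t)) t) {t₀ : ℝ} (ht₀ : t₀ ∈ s) (h : f t₀ = g t₀) :
    EqOn f g s := by
  intro t ht
  have hsub : uIcc t₀ t ⊆ s := hs.uIcc_subset ht₀ ht
  have hfc : ContinuousOn f (uIcc t₀ t) := HasDerivAt.continuousOn fun x hx ↦ hf x (hsub hx)
  have hgc : ContinuousOn g (uIcc t₀ t) := HasDerivAt.continuousOn fun x hx ↦ hg x (hsub hx)
  obtain ⟨K, hK⟩ : ∃ K, LipschitzOnWith K F (f '' uIcc t₀ t ∪ g '' uIcc t₀ t) :=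
    hF.locallyLipschitzOn.exists_lipschitzOnWith_of_compact
      ((isCompact_uIcc.image_of_continuousOn hfc).union (isCompact_uIcc.image_of_continuousOn hgc))
  rcases le_total t₀ t with hle | hle
  · rw [uIcc_of_le hle] at hsub hfc hgc hK
    have hIco {x : ℝ} (hx : x ∈ Ico t₀ t) : x ∈ Icc t₀ t := Ico_subset_Icc_self hx
    exact ODE_solution_unique_of_mem_Icc_right (v := fun _ ↦ F) (fun _ _ ↦ hK)
      hfc (fun x hx ↦ (hf x (hsub (hIco hx))).hasDerivWithinAt)
      (fun x hx ↦ Or.inl (mem_image_of_mem f (hIco hx)))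
      hgc (fun x hx ↦ (hg x (hsub (hIco hx))).hasDerivWithinAt)
      (fun x hx ↦ Or.inr (mem_image_of_mem g (hIco hx))) h (right_mem_Icc.2 hle)
  · rw [uIcc_of_ge hle] at hsub hfc hgc hK
    have hIoc {x : ℝ} (hx : x ∈ Ioc t t₀) : x ∈ Icc t t₀ := Ioc_subset_Icc_self hx
    exact ODE_solution_unique_of_mem_Icc_left (v := fun _ ↦ F) (fun _ _ ↦ hK)
      hfc (fun x hx ↦ (hf x (hsub (hIoc hx))).hasDerivWithinAt)
      (fun x hx ↦ Or.inl (mem_image_of_mem f (hIoc hx)))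
      hgc (fun x hx ↦ (hg x (hsub (hIoc hx))).hasDerivWithinAt)
      (fun x hx ↦ Or.inr (mem_image_of_mem g (hIoc hx))) h (left_mem_Icc.2 hle)

section BernoulliEquation

variable {u : ℝ → ℝ} {c p : ℝ}

theorem hasDerivAt_rpow_one_sub_of_hasDerivAt {x : ℝ} (hpos : 0 < u x)
    (hu : HasDerivAt u (c * u x ^ p) x) :
    HasDerivAt (fun y ↦ u y ^ (1 - p)) (c * (1 - p)) x := by
  refine (hu.rpow_const (Or.inl hpos.ne')).congr_deriv ?_
  have hcancel : u x ^ p * u x ^ (1 - p - 1) = 1 := by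
    rw [← Real.rpow_add hpos]
    simp
  linear_combination c * (1 - p) * hcancel

theorem exists_rpow_one_sub_eq_of_hasDerivAt {s : Set ℝ} (hs : IsOpen s) (hs' : IsPreconnected s)
    (hpos : ∀ x ∈ s, 0 < u x) (hu : ∀ x ∈ s, HasDerivAt u (c * u x ^ p) x) :
    ∃ b, ∀ x ∈ s, u x ^ (1 - p) = c * (1 - p) * x + b :=
  exists_eqOn_add_const_of_hasDerivAt hs hs'
    (fun x hx ↦ hasDerivAt_rpow_one_sub_of_hasDerivAt (hpos x hx) (hu x hx))
    (fun _ _ ↦ hasDerivAt_const_mul (c * (1 - p)))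

theorem exists_nonpos_of_hasDerivAt_rpow (hp : 1 < p) (hc : 0 < c) {a : ℝ}
    (hu : ∀ x ∈ Ioi a, HasDerivAt u (c * u x ^ p) x) : ∃ x ∈ Ioi a, u x ≤ 0 := by
  by_contra! hpos
  obtain ⟨b, hb⟩ := exists_rpow_one_sub_eq_of_hasDerivAt isOpen_Ioi isPreconnected_Ioi hpos hu
  have hslope : c * (1 - p) < 0 := mul_neg_of_pos_of_neg hc (sub_neg.2 hp)
  have hlim : Tendsto (fun x ↦ c * (1 - p) * x + b) atTop atBot :=
    tendsto_atBot_add_const_right _ b (tendsto_id.const_mul_atTop_of_neg hslope)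
  obtain ⟨x, hx, hax⟩ := ((hlim.eventually_le_atBot 0).and (eventually_gt_atTop a)).exists
  exact (Real.rpow_pos_of_pos (hpos x hax) (1 - p)).not_ge ((hb x hax).trans_le hx)

end BernoulliEquation

section AbsRpowEquation

variable {v : ℝ → ℝ} {a p : ℝ}

theorem antitoneOn_of_hasDerivAt_neg_abs_rpow {s : Set ℝ} (hs : Convex ℝ s)
    (hv : ∀ x ∈ s, HasDerivAt v (-|v x| ^ p) x) : AntitoneOn v s := by
  refine antitoneOn_of_hasDerivWithinAt_nonpos hs (HasDerivAt.continuousOn hv)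
    (fun x hx ↦ (hv x (interior_subset hx)).hasDerivWithinAt) fun x _ ↦ ?_
  exact neg_nonpos.2 (Real.rpow_nonneg (abs_nonneg _) p)

theorem nonneg_of_hasDerivAt_neg_abs_rpow (hp : 1 < p)
    (hv : ∀ x ∈ Ioi a, HasDerivAt v (-|v x| ^ p) x) : ∀ x ∈ Ioi a, 0 ≤ v x := by
  intro x hx
  by_contra! hneg
  have hsub : Ioi x ⊆ Ioi a := Ioi_subset_Ioi (le_of_lt hx)
  have hneg_after : ∀ y ∈ Ioi x, v y < 0 := fun y hy ↦
    (antitoneOn_of_hasDerivAt_neg_abs_rpow (convex_Ioi a) hv hx (hsub hy)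
      (le_of_lt hy)).trans_lt hneg
  have hder : ∀ y ∈ Ioi x, HasDerivAt (-v) (1 * (-v) y ^ p) y := fun y hy ↦
    (hv y (hsub hy)).neg.congr_deriv (by simp [abs_of_neg (hneg_after y hy)])
  obtain ⟨y, hy, hvy⟩ := exists_nonpos_of_hasDerivAt_rpow hp one_pos hder
  exact (hneg_after y hy).not_ge (neg_nonpos.1 hvy)

theorem eqOn_zero_or_pos_of_hasDerivAt_neg_abs_rpow (hp : 1 < p)
    (hv : ∀ x ∈ Ioi a, HasDerivAt v (-|v x| ^ p) x) :
    EqOn v 0 (Ioi a) ∨ ∀ x ∈ Ioi a, 0 < v x := by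
  refine or_iff_not_imp_right.2 fun hpos ↦ ?_
  push Not at hpos
  obtain ⟨x₀, hx₀, hle⟩ := hpos
  have hzero : v x₀ = 0 := hle.antisymm (nonneg_of_hasDerivAt_neg_abs_rpow hp hv x₀ hx₀)
  have hLip : LocallyLipschitz fun y : ℝ ↦ -|y| ^ p := (contDiff_norm_rpow hp).neg.locallyLipschitz
  refine eqOn_of_hasDerivAt_of_locallyLipschitz hLip ordConnected_Ioi hv (fun x _ ↦ ?_) hx₀ hzero
  simp [Real.zero_rpow (zero_lt_one.trans hp).ne']

theorem exists_eq_mul_rpow_of_hasDerivAt_neg_abs_rpow {β : ℝ} (hp : 1 < p) (hβ : β = 1 / (p - 1))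
    (hv : ∀ x ∈ Ioi a, HasDerivAt v (-|v x| ^ p) x) (hpos : ∀ x ∈ Ioi a, 0 < v x) :
    ∃ α, 0 ≤ α + a ∧ ∀ x ∈ Ioi a, v x = β ^ β * (α + x) ^ (-β) := by
  have hp' : 0 < p - 1 := sub_pos.2 hp
  have hβ0 : 0 < β := hβ ▸ one_div_pos.2 hp'
  have hpβ : p - 1 = β⁻¹ := by rw [hβ, one_div, inv_inv]
  obtain ⟨b, hb⟩ := exists_rpow_one_sub_eq_of_hasDerivAt (c := -1) isOpen_Ioi isPreconnected_Ioi
    hpos fun x hx ↦ (hv x hx).congr_deriv (by rw [abs_of_pos (hpos x hx), neg_one_mul])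
  have haffine : ∀ x ∈ Ioi a, v x ^ (1 - p) = β⁻¹ * (β * b + x) := fun x hx ↦ by
    rw [hb x hx, mul_add, inv_mul_cancel_left₀ hβ0.ne', ← hpβ]
    ring
  have hbase : ∀ x ∈ Ioi a, 0 < β * b + x := fun x hx ↦
    pos_of_mul_pos_right (haffine x hx ▸ Real.rpow_pos_of_pos (hpos x hx) _) (inv_pos.2 hβ0).le
  refine ⟨β * b, le_of_forall_pos_le_add fun ε hε ↦ ?_, fun x hx ↦ ?_⟩
  · rw [add_assoc]
    exact (hbase (a + ε) (lt_add_of_pos_right a hε)).le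
  · calc v x = (v x ^ (1 - p)) ^ (-β) := by
          rw [← neg_sub, hpβ, ← Real.rpow_mul (hpos x hx).le, neg_mul_neg,
            inv_mul_cancel₀ hβ0.ne', Real.rpow_one]
      _ = β ^ β * (β * b + x) ^ (-β) := by
          rw [haffine x hx, Real.mul_rpow (inv_pos.2 hβ0).le (hbase x hx).le,
            Real.inv_rpow hβ0.le, Real.rpow_neg hβ0.le, inv_inv]

end AbsRpowEquation

section RpowAntiderivative

variable {β c : ℝ}

theorem hasDerivAt_div_mul_add_rpow_one_sub {α x : ℝ} (hβ : β ≠ 1) (hx : α + x ≠ 0) :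
    HasDerivAt (fun s ↦ c / (1 - β) * (α + s) ^ (1 - β)) (c * (α + x) ^ (-β)) x := by
  have hβ' : 1 - β ≠ 0 := sub_ne_zero.2 hβ.symm
  refine ((((hasDerivAt_id x).const_add α).rpow_const (p := 1 - β) (Or.inl hx)).const_mul
    (c / (1 - β))).congr_deriv ?_
  rw [id_eq, show 1 - β - 1 = -β by ring]
  field_simp

theorem not_continuousOn_Ici_of_hasDerivAt_rpow_neg (hβ : 1 < β) (hc : c ≠ 0) {f : ℝ → ℝ}
    (hf : ∀ x ∈ Ioi 0, HasDerivAt f (c * x ^ (-β)) x) : ¬ContinuousOn f (Ici 0) := by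
  intro hcont
  have hk : c / (1 - β) ≠ 0 := div_ne_zero hc (sub_neg.2 hβ).ne
  obtain ⟨C, hC⟩ := exists_eqOn_add_const_of_hasDerivAt isOpen_Ioi isPreconnected_Ioi hf
    fun x hx ↦ by
      simpa using hasDerivAt_div_mul_add_rpow_one_sub (α := 0) (c := c) hβ.ne'
        (by simpa using hx.ne')
  have hf0 : Tendsto f (𝓝[>] 0) (𝓝 (f 0)) :=
    (hcont 0 self_mem_Ici).mono_left (nhdsWithin_mono 0 Ioi_subset_Ici_self)
  have hpow : (fun x ↦ (f x - C) / (c / (1 - β))) =ᶠ[𝓝[>] 0] fun x ↦ x ^ (1 - β) := by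
    filter_upwards [self_mem_nhdsWithin] with x hx
    rw [hC hx, add_sub_cancel_right, mul_div_cancel_left₀ _ hk]
  exact not_tendsto_nhds_of_tendsto_atTop (tendsto_rpow_neg_nhdsGT_zero (sub_neg.2 hβ)) _
    (((hf0.sub_const C).div_const _).congr' hpow)

theorem sub_eq_of_hasDerivAt_mul_add_rpow_neg {α s : ℝ} {f : ℝ → ℝ} (hβ : β ≠ 1) (hα : 0 ≤ α)
    (hαβ : 1 < β → 0 < α) (hcont : ContinuousOn f (Ici 0))
    (hf : ∀ x ∈ Ioi 0, HasDerivAt f (c * (α + x) ^ (-β)) x) (hs : 0 ≤ s) :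
    f s - f 0 = c / (1 - β) * ((α + s) ^ (1 - β) - α ^ (1 - β)) := by
  have hbase : ∀ x ∈ Ici (0 : ℝ), α + x ≠ 0 ∨ 0 ≤ 1 - β := fun x hx ↦
    (le_or_gt β 1).symm.imp (fun h ↦ (add_pos_of_pos_of_nonneg (hαβ h) hx).ne') sub_nonneg.2
  have hprim : ContinuousOn (fun x ↦ c / (1 - β) * (α + x) ^ (1 - β)) (Ici 0) :=
    continuousOn_const.mul ((continuousOn_const.add continuousOn_id).rpow_const hbase)
  have hsub := sub_eq_sub_of_hasDerivAt_Ioi hcont hprim hf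
    (fun x hx ↦ hasDerivAt_div_mul_add_rpow_one_sub hβ (add_pos_of_nonneg_of_pos hα hx).ne') hs
  rw [hsub, add_zero, mul_sub]

end RpowAntiderivative

theorem stmt2_general (p β cp : ℝ) (hp : 1 < p) (hp2 : p ≠ 2)
    (hβ : β = 1 / (p - 1)) (hcp : cp = β ^ β / (1 - β))
    (w : ℝ → ℝ) (hcont : ContinuousOn w (Ici 0))
    (hw : DifferentiableOn ℝ w (Ioi 0)) (hw' : DifferentiableOn ℝ (deriv w) (Ioi 0))
    (hODE : ∀ s : ℝ, 0 < s → -deriv (deriv w) s = |deriv w s| ^ p) :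
    (∀ s : ℝ, 0 ≤ s → w s = w 0) ∨
      ∃ α : ℝ, 0 ≤ α ∧ (p < 2 → 0 < α) ∧ ∀ s : ℝ, 0 ≤ s →
        w s = w 0 + cp * ((α + s) ^ (1 - β) - α ^ (1 - β)) := by
  have hp' : 0 < p - 1 := sub_pos.2 hp
  have hβ0 : 0 < β := hβ ▸ one_div_pos.2 hp'
  have hβ_ne : β ≠ 1 := fun h ↦ hp2 (by rw [h, eq_div_iff hp'.ne'] at hβ; linarith)
  have hβ_gt : 1 < β ↔ p < 2 := by rw [hβ, one_lt_div hp', sub_lt_iff_lt_add, one_add_one_eq_two]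
  have hw_deriv : ∀ s ∈ Ioi 0, HasDerivAt w (deriv w s) s := fun s hs ↦
    (hw.differentiableAt (Ioi_mem_nhds hs)).hasDerivAt
  have hv : ∀ s ∈ Ioi 0, HasDerivAt (deriv w) (-|deriv w s| ^ p) s := fun s hs ↦ by
    simpa only [← hODE s hs, neg_neg] using (hw'.differentiableAt (Ioi_mem_nhds hs)).hasDerivAt
  refine (eqOn_zero_or_pos_of_hasDerivAt_neg_abs_rpow hp hv).imp (fun hzero s hs ↦ ?_) fun hpos ↦ ?_
  · have hconst := sub_eq_sub_of_hasDerivAt_Ioi hcont continuousOn_const hw_deriv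
      (fun x hx ↦ (hasDerivAt_const x (0 : ℝ)).congr_deriv (hzero hx).symm) hs
    rwa [sub_self, sub_eq_zero] at hconst
  · obtain ⟨α, hα, hα_eq⟩ := exists_eq_mul_rpow_of_hasDerivAt_neg_abs_rpow hp hβ hv hpos
    rw [add_zero] at hα
    have hw_rpow : ∀ s ∈ Ioi 0, HasDerivAt w (β ^ β * (α + s) ^ (-β)) s := fun s hs ↦
      hα_eq s hs ▸ hw_deriv s hs
    have hα_pos : 1 < β → 0 < α := fun hβ1 ↦ hα.lt_of_ne fun h0 ↦
      not_continuousOn_Ici_of_hasDerivAt_rpow_neg hβ1 (Real.rpow_pos_of_pos hβ0 β).ne'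
        (by simpa only [← h0, zero_add] using hw_rpow) hcont
    refine ⟨α, hα, fun hp2' ↦ hα_pos (hβ_gt.2 hp2'), fun s hs ↦ ?_⟩
    rw [hcp, ← sub_eq_iff_eq_add']
    exact sub_eq_of_hasDerivAt_mul_add_rpow_neg hβ_ne hα hα_pos hcont hw_rpow hs

theorem stmt2 (p β cp : ℝ) (hp : 2 < p)
    (hβ : β = 1 / (p - 1)) (hcp : cp = β ^ β / (1 - β))
    (w : ℝ → ℝ) (hw0 : w 0 = 0)
    (hcont : ContinuousOn w (Ici 0))
    (hC2 : ContDiffOn ℝ 2 w (Ioi 0))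
    (hODE : ∀ s : ℝ, 0 < s → -deriv (deriv w) s = |deriv w s| ^ p) :
    (∀ s : ℝ, 0 ≤ s → w s = 0) ∨
      ∃ α : ℝ, 0 ≤ α ∧ ∀ s : ℝ, 0 ≤ s →
        w s = cp * ((α + s) ^ (1 - β) - α ^ (1 - β)) := by
  have hw' : DifferentiableOn ℝ (deriv w) (Ioi 0) :=
    (hC2.deriv_of_isOpen isOpen_Ioi one_add_one_eq_two.le).differentiableOn one_ne_zero
  simpa [hw0, hp.not_gt] using stmt2_general p β cp (one_lt_two.trans hp) hp.ne' hβ hcp w hcont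
    (hC2.differentiableOn two_ne_zero) hw' hODE
end
end

section
/- Assume the stated hypotheses on Ω and u. Then for every ε > 0 there exists a constant C > 0 (depending on ε, Ω, n, p and on u) such that |∇u(x,t)| ≤ (1+ε) d_p δ(x)^{−β} + C and u(x,t) ≤ (1+ε) c_p δ(x)^{1−β} + C δ(x) for all (x,t) ∈ Ω × [0,T]. -/
/-!
On `[T / 2, T]` the time derivative is bounded, so each time slice solves `-Δv = |∇v|ᵖ` up to a
bounded error. At a point whose distance `l` to `∂Ω` is small, the rescaling
`z ↦ l ^ (β - 1) * v (b + l z)` about the nearest boundary point `b` yields an approximate solution,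
with an error that vanishes with `l`, in a large part of the half-space `0 < ⟪z, ν b⟫`, subject to
the same a priori bounds. It remains to bound its gradient at height one by any `q > β ^ β`.

There, comparing the solution with its translates shows that it is almost a nondecreasing function
of the height `⟪z, ν b⟫` alone. Comparing it with the one-dimensional profile of slope
`q (s - θ) ^ (-β)`, a strict subsolution because `q > β ^ β`, bounds its increments near height one
by `q` times the distance, up to a small error. A reflection argument turns this bound on
increments into a bound on the gradient.
-/

open Set Metric Filter RealInnerProductSpace

noncomputable section

/-- A set `Ω ⊆ ℝⁿ` has boundary of class `C²`: near each boundary point, `Ω` is the strict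
sublevel set of a `C²` function with nonvanishing gradient (equivalently, after a rigid motion,
the boundary is locally the graph of a `C²` function with `Ω` strictly on one side). -/
def IsC2Boundary {n : ℕ} (Ω : Set (EuclideanSpace ℝ (Fin n))) : Prop :=
  ∀ x ∈ frontier Ω, ∃ f : EuclideanSpace ℝ (Fin n) → ℝ, ∃ U ∈ nhds x,
    ContDiffOn ℝ 2 f U ∧ (∀ y ∈ U, fderiv ℝ f y ≠ 0) ∧
    U ∩ Ω = U ∩ {y | f y < 0} ∧ U ∩ frontier Ω = U ∩ {y | f y = 0}

open scoped Topology
open InnerProductSpace (rankOne)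

section SecondOrderCalculus

variable {E : Type*} [NormedAddCommGroup E] [InnerProductSpace ℝ E]

/-- The trace of a continuous endomorphism, as a linear functional; applied to a Hessian, it is
the Laplacian. -/
def traceCLM : (E →L[ℝ] E) →ₗ[ℝ] ℝ :=
  LinearMap.trace ℝ E ∘ₗ ContinuousLinearMap.coeLM ℝ

theorem traceCLM_eq_sum_inner {ι : Type*} [Fintype ι] (b : OrthonormalBasis ι ℝ E)
    (h : E →L[ℝ] E) : traceCLM h = ∑ i, ⟪b i, h (b i)⟫ :=
  LinearMap.trace_eq_sum_inner _ b

theorem traceCLM_conj (S : E ≃ₗᵢ[ℝ] E) (h : E →L[ℝ] E) :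
    traceCLM ((S.symm : E →L[ℝ] E) ∘L h ∘L (S : E →L[ℝ] E)) = traceCLM h :=
  LinearMap.trace_conj' (h : E →ₗ[ℝ] E) S.symm.toLinearEquiv

theorem traceCLM_id [FiniteDimensional ℝ E] :
    traceCLM (ContinuousLinearMap.id ℝ E) = Module.finrank ℝ E :=
  LinearMap.trace_id ℝ E

theorem traceCLM_rankOne_self [FiniteDimensional ℝ E] (ν : E) :
    traceCLM (rankOne ℝ ν ν) = ‖ν‖ ^ 2 :=
  (InnerProductSpace.trace_rankOne ν ν).trans (real_inner_self_eq_norm_sq ν)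

variable [CompleteSpace E]

/-- `f` has gradient `g` near `x`, and the gradient field `g` has derivative `h` at `x`; that is,
`h` is the Hessian of `f` at `x`. -/
structure HasGradHessAt (f : E → ℝ) (g : E → E) (h : E →L[ℝ] E) (x : E) : Prop where
  eventually_hasGradientAt : ∀ᶠ y in 𝓝 x, HasGradientAt f (g y) y
  hasFDerivAt : HasFDerivAt g h x

namespace HasGradHessAt

variable {f f₁ f₂ : E → ℝ} {g g₁ g₂ : E → E} {h h₁ h₂ : E →L[ℝ] E} {x : E}

theorem hasGradientAt (H : HasGradHessAt f g h x) : HasGradientAt f (g x) x :=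
  H.eventually_hasGradientAt.self_of_nhds

theorem continuousAt (H : HasGradHessAt f g h x) : ContinuousAt f x :=
  H.hasGradientAt.continuousAt

theorem of_isOpen {U : Set E} (hU : IsOpen U) (hx : x ∈ U)
    (hf : ∀ y ∈ U, HasGradientAt f (g y) y) (hg : HasFDerivAt g h x) : HasGradHessAt f g h x :=
  ⟨mem_of_superset (hU.mem_nhds hx) hf, hg⟩

theorem sub (H₁ : HasGradHessAt f₁ g₁ h₁ x) (H₂ : HasGradHessAt f₂ g₂ h₂ x) :
    HasGradHessAt (fun z => f₁ z - f₂ z) (fun z => g₁ z - g₂ z) (h₁ - h₂) x where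
  eventually_hasGradientAt := by
    filter_upwards [H₁.eventually_hasGradientAt, H₂.eventually_hasGradientAt] with y hy₁ hy₂
    rw [hasGradientAt_iff_hasFDerivAt] at hy₁ hy₂ ⊢
    simpa only [map_sub] using hy₁.fun_sub hy₂
  hasFDerivAt := H₁.hasFDerivAt.sub H₂.hasFDerivAt

theorem const_sub (H : HasGradHessAt f g h x) (c : ℝ) :
    HasGradHessAt (fun z => c - f z) (fun z => -g z) (-h) x where
  eventually_hasGradientAt := by
    filter_upwards [H.eventually_hasGradientAt] with y hy
    rw [hasGradientAt_iff_hasFDerivAt] at hy ⊢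
    simpa only [map_neg] using hy.const_sub c
  hasFDerivAt := H.hasFDerivAt.neg

theorem add (H₁ : HasGradHessAt f₁ g₁ h₁ x) (H₂ : HasGradHessAt f₂ g₂ h₂ x) :
    HasGradHessAt (fun z => f₁ z + f₂ z) (fun z => g₁ z + g₂ z) (h₁ + h₂) x where
  eventually_hasGradientAt := by
    filter_upwards [H₁.eventually_hasGradientAt, H₂.eventually_hasGradientAt] with y hy₁ hy₂
    rw [hasGradientAt_iff_hasFDerivAt] at hy₁ hy₂ ⊢
    simpa only [map_add] using hy₁.fun_add hy₂
  hasFDerivAt := H₁.hasFDerivAt.add H₂.hasFDerivAt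

theorem comp_add_right {a : E} (H : HasGradHessAt f g h (x + a)) :
    HasGradHessAt (fun z => f (z + a)) (fun z => g (z + a)) h x where
  eventually_hasGradientAt := by
    have htendsto : Tendsto (· + a) (𝓝 x) (𝓝 (x + a)) := (continuous_add_const a).continuousAt
    filter_upwards [htendsto.eventually H.eventually_hasGradientAt] with y hy
    rw [hasGradientAt_iff_hasFDerivAt] at hy ⊢
    exact (hasFDerivAt_comp_add_right a).2 hy
  hasFDerivAt := (hasFDerivAt_comp_add_right a).2 H.hasFDerivAt

theorem comp_smul_right {l : ℝ} (H : HasGradHessAt f g h (l • x)) :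
    HasGradHessAt (fun z => f (l • z)) (fun z => l • g (l • z)) (l ^ 2 • h) x where
  eventually_hasGradientAt := by
    have htendsto : Tendsto (l • ·) (𝓝 x) (𝓝 (l • x)) := (continuous_const_smul l).continuousAt
    filter_upwards [htendsto.eventually H.eventually_hasGradientAt] with y hy
    rw [hasGradientAt_iff_hasFDerivAt] at hy ⊢
    refine (hy.comp y ((hasFDerivAt_id y).const_smul l)).congr_fderiv ?_
    ext v
    simp
  hasFDerivAt := by
    refine ((H.hasFDerivAt.comp x ((hasFDerivAt_id x).const_smul l)).const_smul l).congr_fderiv ?_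
    ext v
    simp [smul_smul, sq]

theorem comp_linearIsometryEquiv (S : E ≃ₗᵢ[ℝ] E) (H : HasGradHessAt f g h (S x)) :
    HasGradHessAt (fun z => f (S z)) (fun z => S.symm (g (S z)))
      ((S.symm : E →L[ℝ] E) ∘L h ∘L (S : E →L[ℝ] E)) x where
  eventually_hasGradientAt := by
    have htendsto : Tendsto S (𝓝 x) (𝓝 (S x)) := S.continuous.continuousAt
    filter_upwards [htendsto.eventually H.eventually_hasGradientAt] with y hy
    rw [hasGradientAt_iff_hasFDerivAt] at hy ⊢
    refine (hy.comp y (S : E →L[ℝ] E).hasFDerivAt).congr_fderiv ?_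
    ext v
    simp [LinearIsometryEquiv.inner_map_eq_flip]
  hasFDerivAt := (S.symm : E →L[ℝ] E).hasFDerivAt.comp x
    (H.hasFDerivAt.comp x (S : E →L[ℝ] E).hasFDerivAt)

theorem norm_sub_sq (y x : E) :
    HasGradHessAt (fun z => ‖z - y‖ ^ 2) (fun z => (2 : ℝ) • (z - y))
      ((2 : ℝ) • ContinuousLinearMap.id ℝ E) x where
  eventually_hasGradientAt := Eventually.of_forall fun z => by
    rw [hasGradientAt_iff_hasFDerivAt]
    refine ((hasFDerivAt_id z).sub_const y).norm_sq.congr_fderiv ?_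
    ext v
    simp
  hasFDerivAt := ((hasFDerivAt_id x).sub_const y).const_smul (2 : ℝ)

theorem const_mul (H : HasGradHessAt f g h x) (c : ℝ) :
    HasGradHessAt (fun z => c * f z) (fun z => c • g z) (c • h) x where
  eventually_hasGradientAt := by
    filter_upwards [H.eventually_hasGradientAt] with y hy
    rw [hasGradientAt_iff_hasFDerivAt] at hy ⊢
    simpa only [map_smul] using hy.const_mul c
  hasFDerivAt := H.hasFDerivAt.const_smul c

theorem comp_inner_right {φ φ' : ℝ → ℝ} {φ'' : ℝ} (ν : E)
    (hφ : ∀ᶠ s in 𝓝 ⟪x, ν⟫, HasDerivAt φ (φ' s) s) (hφ' : HasDerivAt φ' φ'' ⟪x, ν⟫) :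
    HasGradHessAt (fun z => φ ⟪z, ν⟫) (fun z => φ' ⟪z, ν⟫ • ν) (φ'' • rankOne ℝ ν ν) x := by
  have hinner (z : E) : HasFDerivAt (fun z : E => ⟪z, ν⟫) (innerSL ℝ ν) z := by
    simp_rw [real_inner_comm]
    exact (innerSL ℝ ν).hasFDerivAt
  have htendsto : Tendsto (fun z : E => ⟪z, ν⟫) (𝓝 x) (𝓝 ⟪x, ν⟫) := (hinner x).continuousAt
  refine ⟨?_, ?_⟩
  · filter_upwards [htendsto.eventually hφ] with z hz
    rw [hasGradientAt_iff_hasFDerivAt]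
    refine (hz.comp_hasFDerivAt z (hinner z)).congr_fderiv ?_
    ext v
    simp
  · refine ((hφ'.comp_hasFDerivAt x (hinner x)).smul_const ν).congr_fderiv ?_
    ext v
    simp [smul_smul]

end HasGradHessAt

theorem second_deriv_nonpos_of_isLocalMax {φ φ' : ℝ → ℝ} {φ'' a : ℝ} (hmax : IsLocalMax φ a)
    (hφ : ∀ᶠ s in 𝓝 a, HasDerivAt φ (φ' s) s) (hφ' : HasDerivAt φ' φ'' a) : φ'' ≤ 0 := by
  by_contra! hpos
  have hderiv : deriv φ =ᶠ[𝓝 a] φ' := hφ.mono fun s hs => hs.deriv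
  have hderiv₂ : deriv (deriv φ) a = φ'' := hderiv.deriv_eq.trans hφ'.deriv
  have hmin : IsLocalMin φ a := isLocalMin_of_deriv_deriv_pos (hderiv₂ ▸ hpos)
    hmax.deriv_eq_zero hφ.self_of_nhds.continuousAt
  have hconst : φ =ᶠ[𝓝 a] fun _ => φ a := by
    filter_upwards [hmax, hmin] with s hs₁ hs₂ using le_antisymm hs₁ hs₂
  have hzero : deriv φ =ᶠ[𝓝 a] fun _ => 0 := by simpa using hconst.deriv
  exact hpos.ne (by rw [← hderiv₂, hzero.deriv_eq, deriv_const])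

theorem HasGradHessAt.traceCLM_nonpos_of_isLocalMax [FiniteDimensional ℝ E] {f : E → ℝ}
    {g : E → E} {h : E →L[ℝ] E} {x : E} (H : HasGradHessAt f g h x) (hmax : IsLocalMax f x) :
    traceCLM h ≤ 0 := by
  rw [traceCLM_eq_sum_inner (stdOrthonormalBasis ℝ E)]
  refine Finset.sum_nonpos fun i _ => ?_
  set e := stdOrthonormalBasis ℝ E i
  have hline (s : ℝ) : HasDerivAt (fun s : ℝ => x + s • e) e s := by
    simpa using ((hasDerivAt_id s).smul_const e).const_add x
  have hx : x + (0 : ℝ) • e = x := by simp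
  have htendsto : Tendsto (fun s : ℝ => x + s • e) (𝓝 0) (𝓝 x) := by
    simpa only [hx] using (hline 0).continuousAt.tendsto
  refine second_deriv_nonpos_of_isLocalMax (φ := fun s : ℝ => f (x + s • e))
    (φ' := fun s => ⟪e, g (x + s • e)⟫) (a := 0) ?_ ?_ ?_
  · filter_upwards [htendsto.eventually hmax] with s hs
    simpa only [hx] using hs
  · filter_upwards [htendsto.eventually H.eventually_hasGradientAt] with s hs
    rw [hasGradientAt_iff_hasFDerivAt] at hs
    exact (hs.comp_hasDerivAt s (hline s)).congr_deriv (by simp [real_inner_comm])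
  · have hg : HasFDerivAt g h (x + (0 : ℝ) • e) := by rw [hx]; exact H.hasFDerivAt
    exact (innerSL ℝ e).hasFDerivAt.comp_hasDerivAt 0 (hg.comp_hasDerivAt 0 (hline 0))

theorem HasGradHessAt.eq_zero_of_isLocalMax {f : E → ℝ} {g : E → E} {h : E →L[ℝ] E} {x : E}
    (H : HasGradHessAt f g h x) (hmax : IsLocalMax f x) : g x = 0 := by
  have := hmax.hasFDerivAt_eq_zero (hasGradientAt_iff_hasFDerivAt.1 H.hasGradientAt)
  simpa using this

end SecondOrderCalculus

section MaximumPrinciple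

variable {E : Type*} [NormedAddCommGroup E] [InnerProductSpace ℝ E]

/-- The cylinder around the axis `y + ℝ ν` cut out by `lo ≤ ⟪z, ν⟫ ≤ hi` and by the ball of radius
`ρ` about `y`; comparison functions are compared with solutions on such sets. -/
def slab (ν y : E) (lo hi ρ : ℝ) : Set E :=
  {z | ⟪z, ν⟫ ∈ Icc lo hi ∧ ‖z - y‖ ≤ ρ}

variable {ν y z : E} {lo hi ρ : ℝ}

theorem continuous_inner_left_const (ν : E) : Continuous fun z : E => ⟪z, ν⟫ := by fun_prop

theorem mem_posTangentConeAt_slab (hν : 0 < ⟪ν, ν⟫) (hlo : ⟪z, ν⟫ = lo) (hhi : lo < hi)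
    (hρ : ‖z - y‖ < ρ) : ν ∈ posTangentConeAt (slab ν y lo hi ρ) z := by
  refine mem_posTangentConeAt_of_frequently_mem (Eventually.frequently ?_)
  have hline : Continuous fun t : ℝ => z + t • ν := by fun_prop
  have h₁ : ∀ᶠ t : ℝ in 𝓝 0, ⟪z + t • ν, ν⟫ < hi :=
    ((continuous_inner_left_const ν).comp hline).continuousAt.eventually_lt_const (by simpa [hlo])
  have h₂ : ∀ᶠ t : ℝ in 𝓝 0, ‖z + t • ν - y‖ < ρ :=
    (hline.sub continuous_const).norm.continuousAt.eventually_lt_const (by simpa)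
  filter_upwards [nhdsWithin_le_nhds h₁, nhdsWithin_le_nhds h₂, self_mem_nhdsWithin] with t h₁ h₂ ht
  refine ⟨⟨?_, h₁.le⟩, h₂.le⟩
  rw [inner_add_left, real_inner_smul_left, hlo]
  exact le_add_of_nonneg_right (mul_nonneg (mem_Ioi.1 ht).le hν.le)

theorem slab_mem_nhds (hlo : lo < ⟪z, ν⟫) (hhi : ⟪z, ν⟫ < hi) (hρ : ‖z - y‖ < ρ) :
    slab ν y lo hi ρ ∈ 𝓝 z := by
  have hν := (continuous_inner_left_const ν).continuousAt (x := z)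
  have hy : ContinuousAt (fun z => ‖z - y‖) z := by fun_prop
  filter_upwards [hν.eventually_const_lt hlo, hν.eventually_lt_const hhi,
    hy.eventually_lt_const hρ] with w h₁ h₂ h₃ using ⟨⟨h₁.le, h₂.le⟩, h₃.le⟩

variable [FiniteDimensional ℝ E]

theorem isCompact_slab (ν y : E) (lo hi ρ : ℝ) : IsCompact (slab ν y lo hi ρ) := by
  refine (isCompact_closedBall y ρ).of_isClosed_subset ?_ fun z hz =>
    mem_closedBall_iff_norm.2 hz.2
  exact (isClosed_Icc.preimage (continuous_inner_left_const ν)).inter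
    (isClosed_le (continuous_id.sub continuous_const).norm continuous_const)

theorem nonpos_of_mem_slab (hν : 0 < ⟪ν, ν⟫) {F : E → ℝ} {g : E → E} {h : E → E →L[ℝ] E}
    (hF : ∀ z ∈ slab ν y lo hi ρ, HasGradHessAt F g (h z) z)
    (hint : ∀ z ∈ slab ν y lo hi ρ, 0 < F z → g z = 0 → 0 < traceCLM (h z))
    (hside : ∀ z ∈ slab ν y lo hi ρ, ‖z - y‖ = ρ → F z ≤ 0)
    (htop : ∀ z ∈ slab ν y lo hi ρ, ⟪z, ν⟫ = hi → F z ≤ 0)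
    (hbot : ∀ z ∈ slab ν y lo hi ρ, ⟪z, ν⟫ = lo → F z ≤ 0 ∨ 0 < ⟪g z, ν⟫)
    (hz : z ∈ slab ν y lo hi ρ) : F z ≤ 0 := by
  obtain ⟨m, hm, hmax⟩ := (isCompact_slab ν y lo hi ρ).exists_isMaxOn ⟨z, hz⟩
    fun w hw => (hF w hw).continuousAt.continuousWithinAt
  refine (hmax hz).trans (not_lt.1 fun hpos => ?_)
  have hρ : ‖m - y‖ < ρ := hm.2.lt_of_ne fun heq => hpos.not_ge (hside m hm heq)
  have hhi : ⟪m, ν⟫ < hi := hm.1.2.lt_of_ne fun heq => hpos.not_ge (htop m hm heq)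
  rcases hm.1.1.eq_or_lt with heq | hlo
  · have hinward : 0 < ⟪g m, ν⟫ := (hbot m hm heq.symm).resolve_left hpos.not_ge
    have hdiff := (hasGradientAt_iff_hasFDerivAt.1 (hF m hm).hasGradientAt).hasFDerivWithinAt
      (s := slab ν y lo hi ρ)
    have hle := hmax.localize.hasFDerivWithinAt_nonpos hdiff
      (mem_posTangentConeAt_slab hν heq.symm (heq ▸ hhi) hρ)
    exact hinward.not_ge hle
  · have hloc : IsLocalMax F m := hmax.isLocalMax (slab_mem_nhds hlo hhi hρ)
    exact (hint m hm hpos ((hF m hm).eq_zero_of_isLocalMax hloc)).not_ge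
      ((hF m hm).traceCLM_nonpos_of_isLocalMax hloc)

theorem hasGradHessAt_barrier {φ φ' φ'' : ℝ → ℝ} {a : ℝ} (hφ : ∀ s > a, HasDerivAt φ (φ' s) s)
    (hφ' : ∀ s > a, HasDerivAt φ' (φ'' s) s) (k : ℝ) (ν y : E) (hz : a < ⟪z, ν⟫) :
    HasGradHessAt (fun z => φ ⟪z, ν⟫ + k * ‖z - y‖ ^ 2)
      (fun z => φ' ⟪z, ν⟫ • ν + k • (2 : ℝ) • (z - y))
      (φ'' ⟪z, ν⟫ • rankOne ℝ ν ν + k • (2 : ℝ) • ContinuousLinearMap.id ℝ E) z :=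
  (HasGradHessAt.comp_inner_right ν ((eventually_gt_nhds hz).mono hφ) (hφ' _ hz)).add
    ((HasGradHessAt.norm_sub_sq y z).const_mul k)

theorem le_barrier_of_mem_slab (hν : ‖ν‖ = 1) {φ φ' φ'' : ℝ → ℝ} {a k : ℝ} (ha : a < lo)
    (hφ : ∀ s > a, HasDerivAt φ (φ' s) s) (hφ' : ∀ s > a, HasDerivAt φ' (φ'' s) s)
    {v : E → ℝ} {g : E → E} {h : E → E →L[ℝ] E}
    (hv : ∀ z ∈ slab ν y lo hi ρ, HasGradHessAt v g (h z) z)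
    (hint : ∀ z ∈ slab ν y lo hi ρ, g z = φ' ⟪z, ν⟫ • ν + (2 * k) • (z - y) →
      φ ⟪z, ν⟫ + k * ‖z - y‖ ^ 2 < v z →
      φ'' ⟪z, ν⟫ + 2 * k * Module.finrank ℝ E < traceCLM (h z))
    (hside : ∀ z ∈ slab ν y lo hi ρ, ‖z - y‖ = ρ → v z ≤ φ ⟪z, ν⟫ + k * ρ ^ 2)
    (htop : ∀ z ∈ slab ν y lo hi ρ, ⟪z, ν⟫ = hi → v z ≤ φ hi + k * ‖z - y‖ ^ 2)
    (hbot : ∀ z ∈ slab ν y lo hi ρ, ⟪z, ν⟫ = lo →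
      v z ≤ φ lo + k * ‖z - y‖ ^ 2 ∨ φ' lo + 2 * k * ⟪z - y, ν⟫ < ⟪g z, ν⟫)
    (hz : z ∈ slab ν y lo hi ρ) : v z ≤ φ ⟪z, ν⟫ + k * ‖z - y‖ ^ 2 := by
  have hνν : ⟪ν, ν⟫ = 1 := by rw [real_inner_self_eq_norm_sq, hν, one_pow]
  have hF (w : E) (hw : w ∈ slab ν y lo hi ρ) := (hv w hw).sub
    (hasGradHessAt_barrier hφ hφ' k ν y (ha.trans_le hw.1.1))
  refine sub_nonpos.1 (nonpos_of_mem_slab (F := fun z => v z - (φ ⟪z, ν⟫ + k * ‖z - y‖ ^ 2))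
    (hνν.symm ▸ one_pos) hF ?_ ?_ ?_ ?_ hz)
  · intro w hw hpos hgrad
    have := hint w hw (by rw [sub_eq_zero.1 hgrad, smul_smul, mul_comm k]) (sub_pos.1 hpos)
    simp only [map_sub, map_add, map_smul, traceCLM_rankOne_self, traceCLM_id, hν, smul_eq_mul]
    linarith
  · intro w hw heq
    rw [heq]
    exact sub_nonpos.2 (hside w hw heq)
  · intro w hw heq
    rw [heq]
    exact sub_nonpos.2 (htop w hw heq)
  · intro w hw heq
    rw [heq]
    refine (hbot w hw heq).imp sub_nonpos.2 fun hlt => ?_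
    simp only [inner_sub_left, inner_add_left, real_inner_smul_left, hνν] at hlt ⊢
    linarith

end MaximumPrinciple

section GradientEstimate

variable {E : Type*} [NormedAddCommGroup E] [InnerProductSpace ℝ E]

theorem reflection_orthogonal_singleton_apply {e : E} (he : ‖e‖ = 1) (z : E) :
    (ℝ ∙ e)ᗮ.reflection z = z - (2 * ⟪z, e⟫) • e := by
  rw [Submodule.reflection_orthogonal_apply, Submodule.reflection_singleton_apply, he,
    real_inner_comm z e]
  simp [two_mul, two_smul, add_smul]

theorem hasDerivAt_mul_sub_mul_sq (α N s : ℝ) :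
    HasDerivAt (fun s => α * s - N * s ^ 2) (α - 2 * N * s) s :=
  (((hasDerivAt_id' s).const_mul α).fun_sub
    (((hasDerivAt_id' s).fun_pow 2).const_mul N)).congr_deriv (by simp; ring)

theorem hasDerivAt_sub_mul (α N s : ℝ) : HasDerivAt (fun s => α - 2 * N * s) (-(2 * N)) s :=
  (((hasDerivAt_id' s).const_mul (2 * N)).const_sub α).congr_deriv (by ring)

variable [FiniteDimensional ℝ E] {W : E → ℝ} {G : E → E} {H : E → E →L[ℝ] E} {c : E}
  {θ N a η : ℝ}

theorem sub_reflection_le_of_mem_slab {e : E} {N' k : ℝ} (he : ‖e‖ = 1) (hk : 0 ≤ k)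
    (hkη : k * θ ^ 2 = η) (hN' : N' = N + k * Module.finrank ℝ E + 1) (hN'₀ : 0 ≤ N')
    (hW : ∀ z ∈ closedBall c θ, HasGradHessAt W G (H z) z)
    (hN : ∀ z ∈ closedBall c θ, |traceCLM (H z)| ≤ N)
    (hosc : ∀ x ∈ closedBall c θ, ∀ y ∈ closedBall c θ, W x - W y ≤ a * ‖x - y‖ + η) {z : E}
    (hz : z ∈ slab e 0 0 θ θ) :
    W (z + c) - W ((ℝ ∙ e)ᗮ.reflection z + c) ≤
      (2 * a + N' * θ) * ⟪z, e⟫ - N' * ⟪z, e⟫ ^ 2 + k * ‖z - 0‖ ^ 2 := by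
  set S : E ≃ₗᵢ[ℝ] E := (ℝ ∙ e)ᗮ.reflection
  have hmem {z : E} (hz : z ∈ slab e 0 0 θ θ) :
      z + c ∈ closedBall c θ ∧ S z + c ∈ closedBall c θ := by
    simpa [mem_closedBall_iff_norm] using hz.2
  have hside (z : E) (hz : z ∈ slab e 0 0 θ θ) (_ : ‖z - 0‖ = θ) :
      W (z + c) - W (S z + c) ≤ (2 * a + N' * θ) * ⟪z, e⟫ - N' * ⟪z, e⟫ ^ 2 + k * θ ^ 2 := by
    have hle := hosc _ (hmem hz).1 _ (hmem hz).2
    rw [add_sub_add_right_eq_sub, reflection_orthogonal_singleton_apply he, sub_sub_cancel,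
      norm_smul, he, Real.norm_of_nonneg (by linarith [hz.1.1])] at hle
    have : 0 ≤ N' * ⟪z, e⟫ * (θ - ⟪z, e⟫) :=
      mul_nonneg (mul_nonneg hN'₀ hz.1.1) (sub_nonneg.2 hz.1.2)
    rw [reflection_orthogonal_singleton_apply he]
    linarith
  refine le_barrier_of_mem_slab he (sub_one_lt 0) (fun s _ => hasDerivAt_mul_sub_mul_sq _ _ s)
      (fun s _ => hasDerivAt_sub_mul _ _ s) (y := 0)
    (v := fun z => W (z + c) - W (S z + c)) (k := k) (fun z hz =>
      (hW _ (hmem hz).1).comp_add_right.sub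
        ((hW _ (hmem hz).2).comp_add_right.comp_linearIsometryEquiv S)) ?_ hside ?_ ?_ hz
  · intro z hz _ _
    rw [map_sub, traceCLM_conj]
    linarith [(abs_le.1 (hN _ (hmem hz).1)).1, (abs_le.1 (hN _ (hmem hz).2)).2]
  · intro z hz hzθ
    have hnorm : ‖z - 0‖ = θ := hz.2.antisymm <| by
      simpa [he, hzθ] using real_inner_le_norm z e
    rw [hnorm]
    simpa only [hzθ] using hside z hz hnorm
  · intro z _ hz₀
    left
    rw [reflection_orthogonal_singleton_apply he, hz₀]
    simpa using by positivity

/-- Compare `W` with its reflection in the hyperplane through `c` orthogonal to `G c`. -/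
theorem norm_gradient_le_of_forall_sub_le (hθ : 0 < θ) (ha : 0 ≤ a) (hη : 0 ≤ η)
    (hW : ∀ z ∈ closedBall c θ, HasGradHessAt W G (H z) z)
    (hN : ∀ z ∈ closedBall c θ, |traceCLM (H z)| ≤ N)
    (hosc : ∀ x ∈ closedBall c θ, ∀ y ∈ closedBall c θ, W x - W y ≤ a * ‖x - y‖ + η) :
    ‖G c‖ ≤ a + (N + η / θ ^ 2 * Module.finrank ℝ E + 1) * θ / 2 := by
  have hcmem : c ∈ closedBall c θ := mem_closedBall_self hθ.le
  have hN₀ : 0 ≤ N := (abs_nonneg _).trans (hN c hcmem)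
  rcases eq_or_ne (G c) 0 with hG | hG
  · rw [hG, norm_zero]
    positivity
  set k := η / θ ^ 2
  set N' := N + k * Module.finrank ℝ E + 1 with hN'
  have hN'₀ : 0 ≤ N' := by positivity
  set e := ‖G c‖⁻¹ • G c
  have he : ‖e‖ = 1 := norm_smul_inv_norm hG
  have hee : ⟪e, e⟫ = 1 := by rw [real_inner_self_eq_norm_sq, he, one_pow]
  set S : E ≃ₗᵢ[ℝ] E := (ℝ ∙ e)ᗮ.reflection
  have hGe : S (G c) = -G c := by
    have : G c = ‖G c‖ • e := (smul_inv_smul₀ (norm_ne_zero_iff.2 hG) _).symm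
    rw [this, map_smul, Submodule.reflection_orthogonalComplement_singleton_eq_neg, smul_neg]
  have hinner : ⟪G c, e⟫ = ‖G c‖ := by
    rw [real_inner_smul_right, real_inner_self_eq_norm_sq]
    field_simp
  have hF := (((hW (0 + c) (by simpa using hθ.le)).comp_add_right.sub
    ((hW (S 0 + c) (by simpa using hθ.le)).comp_add_right.comp_linearIsometryEquiv S)).sub
    (hasGradHessAt_barrier (a := -1) (fun s _ => hasDerivAt_mul_sub_mul_sq (2 * a + N' * θ) N' s)
      (fun s _ => hasDerivAt_sub_mul _ _ s) k e 0 (by simp))).hasGradientAt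
  have hmax : IsMaxOn (fun z => W (z + c) - W (S z + c) -
      ((2 * a + N' * θ) * ⟪z, e⟫ - N' * ⟪z, e⟫ ^ 2 + k * ‖z - 0‖ ^ 2)) (slab e 0 0 θ θ) 0 := by
    intro z hz
    have := sub_reflection_le_of_mem_slab he (by positivity) (div_mul_cancel₀ η (by positivity))
      hN' hN'₀ hW hN hosc hz
    simpa [S] using this
  have hle := hmax.localize.hasFDerivWithinAt_nonpos
    (hasGradientAt_iff_hasFDerivAt.1 hF).hasFDerivWithinAt
    (mem_posTangentConeAt_slab (hee ▸ one_pos) (inner_zero_left e) hθ (by simpa))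
  have : ‖G c‖ + ‖G c‖ ≤ 2 * a + N' * θ := by simpa [hGe, hinner, he, S] using hle
  linarith

end GradientEstimate

section ApproximateSolutions

variable {E : Type*} [NormedAddCommGroup E] [InnerProductSpace ℝ E]

/-- `v`, with gradient `g` and Hessian `h`, solves `-Δv = |∇v|ᵖ` on `U` up to an error `M` and obeys
the a priori bounds `|∇v| ≤ A d ^ (-β)` and `|v| ≤ A d ^ (1 - β)`, where `d` plays the role of the
distance to the boundary. -/
structure IsApproxSolution [CompleteSpace E] (U : Set E) (d : E → ℝ) (p β A M : ℝ) (v : E → ℝ)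
    (g : E → E) (h : E → E →L[ℝ] E) : Prop where
  hasGradHessAt : ∀ x ∈ U, HasGradHessAt v g (h x) x
  abs_traceCLM_add_le : ∀ x ∈ U, |traceCLM (h x) + ‖g x‖ ^ p| ≤ M
  norm_le : ∀ x ∈ U, ‖g x‖ ≤ A * d x ^ (-β)
  abs_apply_le : ∀ x ∈ U, |v x| ≤ A * d x ^ (1 - β)

/-- An exhaustion, as `κ → 0⁺`, of the open half-space with inward normal `ν`. -/
def truncHalfSpace (ν : E) (κ : ℝ) : Set E :=
  {z | ‖z‖ < κ⁻¹ ∧ κ < ⟪z, ν⟫}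

/-- An approximate solution with error `κ` in the truncated half-space. The statements below hold
for all small `κ`, uniformly in the direction `ν` and in the approximate solution; this replaces
the extraction of limits in a blow-up argument. -/
abbrev IsHalfSpaceApprox [CompleteSpace E] (ν : E) (p β A κ : ℝ) (v : E → ℝ) (g : E → E)
    (h : E → E →L[ℝ] E) : Prop :=
  IsApproxSolution (truncHalfSpace ν κ) (fun z => ⟪z, ν⟫) p β A κ v g h

theorem eventually_lt_nhdsGT_zero {c : ℝ} (hc : 0 < c) : ∀ᶠ κ in 𝓝[>] (0 : ℝ), κ < c :=
  nhdsWithin_le_nhds (eventually_lt_nhds hc)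

theorem eventually_mem_truncHalfSpace (R : ℝ) {r : ℝ} (hr : 0 < r) :
    ∀ᶠ κ in 𝓝[>] (0 : ℝ), ∀ ν z : E, ‖z‖ ≤ R → r ≤ ⟪z, ν⟫ → z ∈ truncHalfSpace ν κ := by
  filter_upwards [eventually_lt_nhdsGT_zero hr, tendsto_inv_nhdsGT_zero.eventually_gt_atTop R]
    with κ hκr hκR ν z hz hzν using ⟨hz.trans_lt hκR, hκr.trans_le hzν⟩

theorem convex_truncHalfSpace (ν : E) (κ : ℝ) : Convex ℝ (truncHalfSpace ν κ) := by
  have hball : Convex ℝ {z : E | ‖z‖ < κ⁻¹} := by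
    simpa only [ball_zero_eq] using convex_ball (0 : E) κ⁻¹
  refine hball.inter (convex_halfSpace_gt ⟨fun _ _ => inner_add_left _ _ _, fun c z => ?_⟩ κ)
  exact real_inner_smul_left z ν c

theorem norm_le_and_abs_inner_sub_one_le {ν z : E} {θ : ℝ} (hν : ‖ν‖ = 1)
    (hz : z ∈ closedBall ν θ) : ‖z‖ ≤ 1 + θ ∧ |⟪z, ν⟫ - 1| ≤ θ := by
  rw [mem_closedBall_iff_norm] at hz
  constructor
  · linarith [norm_le_norm_add_norm_sub' z ν]
  · have := abs_real_inner_le_norm (z - ν) ν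
    rw [inner_sub_left, real_inner_self_eq_norm_sq, hν, one_pow, mul_one] at this
    exact this.trans hz

/-- The penalty `k‖z‖²` reaches the height `K` on the sphere of radius `ρ` while contributing as
little as desired to values, gradients and Laplacians. -/
theorem exists_quadratic_penalty {K η : ℝ} (hK : 0 ≤ K) (hη : 0 < η) (a b R : ℝ) :
    ∃ ρ > R, ∃ k ≥ 0, k * ρ ^ 2 = K ∧ a * k + b * (k * ρ) < η := by
  have hinv : Tendsto (fun ρ : ℝ => ρ⁻¹) atTop (𝓝 0) := tendsto_inv_atTop_zero
  have hlim : Tendsto (fun ρ : ℝ => a * (K * ρ⁻¹ ^ 2) + b * (K * ρ⁻¹)) atTop (𝓝 0) := by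
    simpa using (((hinv.pow 2).const_mul K).const_mul a).add ((hinv.const_mul K).const_mul b)
  obtain ⟨ρ, hsmall, hρR, hρ⟩ := ((hlim.eventually_lt_const hη).and
    ((eventually_gt_atTop R).and (eventually_gt_atTop 0))).exists
  refine ⟨ρ, hρR, K * ρ⁻¹ ^ 2, by positivity, by field_simp, ?_⟩
  rwa [show K * ρ⁻¹ ^ 2 * ρ = K * ρ⁻¹ by field_simp]

theorem exists_mul_rpow_lt {γ c η : ℝ} (hγ : 0 < γ) (hη : 0 < η) {b : ℝ} (hb : 0 < b) :
    ∃ σ ∈ Ioo 0 b, c * σ ^ γ < η := by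
  have hlim : Tendsto (fun σ : ℝ => c * σ ^ γ) (𝓝[>] 0) (𝓝 0) := by
    have := ((Real.continuousAt_rpow_const 0 γ (Or.inr hγ.le)).tendsto.const_mul c).mono_left
      (nhdsWithin_le_nhds (s := Ioi 0))
    simpa [Real.zero_rpow hγ.ne'] using this
  obtain ⟨σ, hσ, hσb, hσ0⟩ := ((hlim.eventually_lt_const hη).and
    ((eventually_lt_nhdsGT_zero hb).and self_mem_nhdsWithin)).exists
  exact ⟨σ, ⟨hσ0, hσb⟩, hσ⟩

theorem exists_mul_rpow_neg_lt {γ c η : ℝ} (hγ : 0 < γ) (hη : 0 < η) (b : ℝ) :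
    ∃ S > b, 0 < S ∧ c * S ^ (-γ) < η := by
  have hlim : Tendsto (fun S : ℝ => c * S ^ (-γ)) atTop (𝓝 0) := by
    simpa using (tendsto_rpow_neg_atTop hγ).const_mul c
  obtain ⟨S, hS, hSb, hS0⟩ := ((hlim.eventually_lt_const hη).and
    ((eventually_gt_atTop b).and (eventually_gt_atTop 0))).exists
  exact ⟨S, hSb, hS0, hS⟩

variable [FiniteDimensional ℝ E] {p β A ε r R : ℝ}

theorem IsApproxSolution.traceCLM_le {U : Set E} {d : E → ℝ} {M : ℝ} {v : E → ℝ} {g : E → E}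
    {h : E → E →L[ℝ] E} (hv : IsApproxSolution U d p β A M v g h) {x : E} (hx : x ∈ U) :
    traceCLM (h x) ≤ M := by
  have := (abs_le.1 (hv.abs_traceCLM_add_le x hx)).2
  linarith [Real.rpow_nonneg (norm_nonneg (g x)) p]

theorem mul_rpow_one_sub {S : ℝ} (hS : 0 < S) (A β : ℝ) :
    A * S ^ (1 - β) = A * S ^ (-β) * S := by
  rw [sub_eq_add_neg, Real.rpow_add hS, Real.rpow_one]
  ring

theorem neg_le_parabola_of_mem_slab {ν : E} {κ σ S ρ k : ℝ} {W : E → ℝ} {G : E → E}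
    {H : E → E →L[ℝ] E} (hν : ‖ν‖ = 1) (hW : IsHalfSpaceApprox ν p β A κ W G H) (hβ₁ : β < 1)
    (hA : 0 < A) (hσ : 0 < σ) (hS : 0 < S) (hU : slab ν 0 σ S ρ ⊆ truncHalfSpace ν κ) (hk : 0 ≤ k)
    (hkρ : k * ρ ^ 2 = A * S ^ (-β) * S)
    (hκ : 2 * k * Module.finrank ℝ E + κ < 2 * (A * S ^ (-β) / S)) {x : E}
    (hx : x ∈ slab ν 0 σ S ρ) :
    -W x ≤ A * σ ^ (1 - β) + A * S ^ (-β) * (2 * ⟪x, ν⟫ - ⟪x, ν⟫ ^ 2 / S) + k * ‖x‖ ^ 2 := by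
  set m := A * S ^ (-β)
  have hm : 0 < m := by positivity
  have hσA : 0 < A * σ ^ (1 - β) := by positivity
  have hφ (s : ℝ) : HasDerivAt (fun s => A * σ ^ (1 - β) + m * (2 * s - s ^ 2 / S))
      (m * (2 - 2 * s / S)) s :=
    (((((hasDerivAt_id' s).const_mul 2).fun_sub
      (((hasDerivAt_id' s).fun_pow 2).div_const S)).const_mul m).const_add _).congr_deriv (by simp)
  have hφ' (s : ℝ) : HasDerivAt (fun s => m * (2 - 2 * s / S)) (-(2 * (m / S))) s :=
    (((((hasDerivAt_id' s).const_mul 2).div_const S).const_sub 2).const_mul m).congr_deriv (by ring)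
  have hparabola {s : ℝ} (hs : s ∈ Icc σ S) : 0 ≤ 2 * s - s ^ 2 / S := by
    have : s ^ 2 / S ≤ s := by rw [div_le_iff₀ hS]; nlinarith [hσ.trans_le hs.1, hs.2]
    linarith [hσ.trans_le hs.1]
  have hWle {z : E} (hz : z ∈ slab ν 0 σ S ρ) : -W z ≤ A * ⟪z, ν⟫ ^ (1 - β) :=
    (neg_le_abs _).trans (hW.abs_apply_le z (hU hz))
  have hWle' {z : E} (hz : z ∈ slab ν 0 σ S ρ) : -W z ≤ m * S := by
    rw [← mul_rpow_one_sub hS]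
    refine (hWle hz).trans ?_
    have := hσ.trans_le hz.1.1
    gcongr
    exact hz.1.2
  have key := le_barrier_of_mem_slab hν hσ (fun s _ => hφ s) (fun s _ => hφ' s) (y := 0)
    (v := fun z => 0 - W z) (k := k) (fun z hz => (hW.hasGradHessAt z (hU hz)).const_sub 0)
    ?_ ?_ ?_ ?_ hx
  · simpa using key
  · intro z hz _ _
    rw [map_neg]
    linarith [hW.traceCLM_le (hU hz)]
  · intro z hz _
    have := mul_nonneg hm.le (hparabola hz.1)
    linarith [hWle' hz]
  · intro z hz _
    have hSS : S ^ 2 / S = S := by field_simp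
    have := mul_nonneg hk (sq_nonneg ‖z - 0‖)
    rw [hSS]
    linarith [hWle' hz]
  · intro z hz hzσ
    have := mul_nonneg hm.le (hparabola hz.1)
    have := mul_nonneg hk (sq_nonneg ‖z - 0‖)
    have := hWle hz
    rw [hzσ] at *
    left
    linarith

/-- Since `-W` is subharmonic up to `κ`, it can be compared with a small concave parabola in the
normal direction. -/
theorem eventually_neg_le_halfSpaceApprox (p : ℝ) (hβ₀ : 0 < β) (hβ₁ : β < 1) (hA : 0 < A)
    (hε : 0 < ε) (hr : 0 < r) (R : ℝ) :
    ∀ᶠ κ in 𝓝[>] (0 : ℝ), ∀ (ν : E) (W : E → ℝ) (G : E → E) (H : E → E →L[ℝ] E),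
       ‖ν‖ = 1 → IsHalfSpaceApprox ν p β A κ W G H → ∀ x, ‖x‖ ≤ R → r ≤ ⟪x, ν⟫ → -ε ≤ W x := by
  obtain ⟨σ, ⟨hσ₀, hσr⟩, hσ⟩ : ∃ σ ∈ Ioo 0 r, A * σ ^ (1 - β) < ε / 3 :=
    exists_mul_rpow_lt (sub_pos.2 hβ₁) (by linarith) hr
  obtain ⟨S, hRS, hS₀, hS⟩ : ∃ S > R, 0 < S ∧ 2 * R * A * S ^ (-β) < ε / 3 :=
    exists_mul_rpow_neg_lt hβ₀ (by linarith) _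
  set m := A * S ^ (-β)
  obtain ⟨ρ, hρR, k, hk, hkρ, hkη⟩ := exists_quadratic_penalty (K := m * S)
    (η := min (ε / 3) (m / S)) (by positivity) (by positivity) (R ^ 2 + 2 * Module.finrank ℝ E) 0 R
  obtain ⟨hkε, hkm⟩ := lt_min_iff.1 hkη
  filter_upwards [eventually_mem_truncHalfSpace (E := E) ρ hσ₀,
    eventually_lt_nhdsGT_zero (c := m / S) (by positivity)] with κ hU hκ ν W G H hν hW x hxR hxr
  have hxν : ⟪x, ν⟫ ≤ R := (real_inner_le_norm x ν).trans (by simpa [hν])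
  have hkdim : 0 ≤ k * (2 * Module.finrank ℝ E) := by positivity
  have hkR : 0 ≤ k * R ^ 2 := by positivity
  have hle := neg_le_parabola_of_mem_slab hν hW hβ₁ hA hσ₀ hS₀
    (fun z hz => hU ν z (by simpa using hz.2) hz.1.1) hk hkρ (by linarith)
    (x := x) ⟨⟨hσr.le.trans hxr, hxν.trans hRS.le⟩, by simpa using hxR.trans hρR.le⟩
  have hparabola : m * (2 * ⟪x, ν⟫ - ⟪x, ν⟫ ^ 2 / S) ≤ m * (2 * R) := by
    gcongr
    have : 0 ≤ ⟪x, ν⟫ ^ 2 / S := by positivity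
    linarith
  have hkx : k * ‖x‖ ^ 2 ≤ k * R ^ 2 := by gcongr
  linarith

theorem abs_rpow_sub_rpow_le {a b B : ℝ} (hp : 1 ≤ p) (ha : a ∈ Icc 0 B) (hb : b ∈ Icc 0 B) :
    |a ^ p - b ^ p| ≤ p * B ^ (p - 1) * |a - b| := by
  have hderiv (s : ℝ) (_ : s ∈ Icc 0 B) :
      HasDerivWithinAt (fun s => s ^ p) (p * s ^ (p - 1)) (Icc 0 B) s :=
    (Real.hasDerivAt_rpow_const (Or.inr hp)).hasDerivWithinAt
  refine (convex_Icc 0 B).norm_image_sub_le_of_norm_hasDerivWithin_le hderiv (fun s hs => ?_) hb ha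
  rw [Real.norm_of_nonneg (by have := hs.1; positivity)]
  have := hs.1
  have := hs.2
  gcongr

theorem IsApproxSolution.neg_le_traceCLM_sub {U : Set E} {d : E → ℝ} {M B : ℝ} {v : E → ℝ}
    {g : E → E} {h : E → E →L[ℝ] E} (hv : IsApproxSolution U d p β A M v g h) (hp : 1 ≤ p)
    {x y : E} (hx : x ∈ U) (hy : y ∈ U) (hgx : ‖g x‖ ≤ B) (hgy : ‖g y‖ ≤ B) :
    -(2 * M + p * B ^ (p - 1) * ‖g x - g y‖) ≤ traceCLM (h x) - traceCLM (h y) := by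
  have hpow := abs_rpow_sub_rpow_le hp ⟨norm_nonneg (g x), hgx⟩ ⟨norm_nonneg (g y), hgy⟩
  have hB : 0 ≤ B := (norm_nonneg _).trans hgx
  have htri : p * B ^ (p - 1) * |‖g x‖ - ‖g y‖| ≤ p * B ^ (p - 1) * ‖g x - g y‖ := by
    gcongr
    exact abs_norm_sub_norm_le _ _
  have hxM := abs_le.1 (hv.abs_traceCLM_add_le x hx)
  have hyM := abs_le.1 (hv.abs_traceCLM_add_le y hy)
  linarith [(abs_le.1 hpow).2, hxM.1, hyM.2]

theorem IsHalfSpaceApprox.norm_le_of_le {ν z : E} {κ c : ℝ} {W : E → ℝ} {G : E → E}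
    {H : E → E →L[ℝ] E} (hW : IsHalfSpaceApprox ν p β A κ W G H) (hβ₀ : 0 < β) (hA : 0 < A)
    (hc : 0 < c) (hz : z ∈ truncHalfSpace ν κ) (hzc : c ≤ ⟪z, ν⟫) : ‖G z‖ ≤ A * c ^ (-β) := by
  refine (hW.norm_le z hz).trans ?_
  gcongr A * ?_
  exact Real.rpow_le_rpow_of_nonpos hc hzc (by linarith)

theorem IsHalfSpaceApprox.abs_le_of_le {ν z : E} {κ c : ℝ} {W : E → ℝ} {G : E → E}
    {H : E → E →L[ℝ] E} (hW : IsHalfSpaceApprox ν p β A κ W G H) (hβ₁ : β < 1) (hA : 0 < A)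
    (hz : z ∈ truncHalfSpace ν κ) (hz₀ : 0 < ⟪z, ν⟫) (hzc : ⟪z, ν⟫ ≤ c) :
    |W z| ≤ A * c ^ (1 - β) := by
  refine (hW.abs_apply_le z hz).trans ?_
  have := (sub_pos.2 hβ₁).le
  gcongr

theorem IsHalfSpaceApprox.abs_sub_le {ν x y : E} {κ c : ℝ} {W : E → ℝ} {G : E → E}
    {H : E → E →L[ℝ] E} (hW : IsHalfSpaceApprox ν p β A κ W G H) (hβ₀ : 0 < β) (hA : 0 < A)
    (hc : 0 < c) (hx : x ∈ truncHalfSpace ν κ) (hy : y ∈ truncHalfSpace ν κ) (hxc : c ≤ ⟪x, ν⟫)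
    (hyc : c ≤ ⟪y, ν⟫) : |W x - W y| ≤ A * c ^ (-β) * ‖x - y‖ := by
  have hconvex : Convex ℝ (truncHalfSpace ν κ ∩ {z | c ≤ ⟪z, ν⟫}) :=
    (convex_truncHalfSpace ν κ).inter (convex_halfSpace_ge
      ⟨fun _ _ => inner_add_left _ _ _, fun t z => real_inner_smul_left z ν t⟩ c)
  refine hconvex.norm_image_sub_le_of_norm_hasFDerivWithin_le (fun z hz =>
    (hasGradientAt_iff_hasFDerivAt.1 (hW.hasGradHessAt z hz.1).hasGradientAt).hasFDerivWithinAt)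
    (fun z hz => ?_) ⟨hy, hyc⟩ ⟨hx, hxc⟩
  rw [LinearIsometryEquiv.norm_map]
  exact hW.norm_le_of_le hβ₀ hA hc hz.1 hz.2

theorem translate_sub_le_of_mem_slab {ν a : E} {κ σ S ρ k η m : ℝ} {W : E → ℝ} {G : E → E}
    {H : E → E →L[ℝ] E} (hν : ‖ν‖ = 1) (hW : IsHalfSpaceApprox ν p β A κ W G H) (hp : 1 ≤ p)
    (hβ₀ : 0 < β) (hβ₁ : β < 1) (hA : 0 < A) (hσ : 0 < σ) (ha : ⟪a, ν⟫ ≤ 0)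
    (hU : ∀ z ∈ slab ν 0 (σ - ⟪a, ν⟫) S ρ, z ∈ truncHalfSpace ν κ ∧ z + a ∈ truncHalfSpace ν κ)
    (hη : 0 < η) (hk : 0 ≤ k) (hkρ : k * ρ ^ 2 = 2 * (A * S ^ (1 - β)))
    (hm : m = p * (A * σ ^ (-β)) ^ (p - 1) + 1)
    (hκ : 2 * k * Module.finrank ℝ E + m * (2 * k * ρ) + 2 * κ < η * m * Real.exp (-m * S))
    (htop : ∀ z ∈ slab ν 0 (σ - ⟪a, ν⟫) S ρ, ⟪z, ν⟫ = S → W (z + a) - W z ≤ η)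
    (hbot : ∀ z ∈ slab ν 0 (σ - ⟪a, ν⟫) S ρ, ⟪z, ν⟫ = σ - ⟪a, ν⟫ → W (z + a) - W z ≤ η)
    {x : E} (hx : x ∈ slab ν 0 (σ - ⟪a, ν⟫) S ρ) : W (x + a) - W x ≤ 2 * η + k * ‖x‖ ^ 2 := by
  have hm₀ : 0 < m := by rw [hm]; positivity
  have hexp (c s : ℝ) :
      HasDerivAt (fun s => c * Real.exp (-m * s)) (-m * c * Real.exp (-m * s)) s :=
    ((((hasDerivAt_id' s).const_mul (-m)).exp).const_mul c).congr_deriv (by ring)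
  have hφ (s : ℝ) : HasDerivAt (fun s => 2 * η - η * Real.exp (-m * s))
      (η * m * Real.exp (-m * s)) s := ((hexp η s).const_sub (2 * η)).congr_deriv (by ring)
  have hφη {s k r : ℝ} (hs : 0 ≤ s) (hk : 0 ≤ k) :
      η ≤ 2 * η - η * Real.exp (-m * s) + k * r ^ 2 := by
    have : η * Real.exp (-m * s) ≤ η * 1 := by
      gcongr
      exact Real.exp_le_one_iff.2 (by nlinarith)
    nlinarith [sq_nonneg r]
  have hpos {z : E} (hz : z ∈ slab ν 0 (σ - ⟪a, ν⟫) S ρ) : σ ≤ ⟪z, ν⟫ ∧ σ ≤ ⟪z + a, ν⟫ := by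
    rw [inner_add_left]
    constructor <;> linarith [hz.1.1]
  have key := le_barrier_of_mem_slab hν (sub_one_lt _) (fun s _ => hφ s)
    (fun s _ => hexp (η * m) s) (y := 0) (v := fun z => W (z + a) - W z) (k := k)
    (fun z hz => (hW.hasGradHessAt _ (hU z hz).2).comp_add_right.sub
      (hW.hasGradHessAt z (hU z hz).1)) ?_ ?_ ?_ ?_ hx
  · rw [sub_zero] at key
    linarith [mul_pos hη (Real.exp_pos (-m * ⟪x, ν⟫))]
  · intro z hz hcrit _
    have hlow := hW.neg_le_traceCLM_sub hp (hU z hz).2 (hU z hz).1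
      (hW.norm_le_of_le hβ₀ hA hσ (hU z hz).2 (hpos hz).2)
      (hW.norm_le_of_le hβ₀ hA hσ (hU z hz).1 (hpos hz).1)
    have hnorm : ‖G (z + a) - G z‖ ≤ η * m * Real.exp (-m * ⟪z, ν⟫) + 2 * k * ρ := by
      rw [hcrit]
      refine (norm_add_le _ _).trans ?_
      rw [norm_smul, norm_smul, hν, mul_one, Real.norm_of_nonneg (by positivity),
        Real.norm_of_nonneg (by positivity)]
      gcongr
      exact hz.2
    have hprod : (m - 1) * ‖G (z + a) - G z‖ ≤
        (m - 1) * (η * m * Real.exp (-m * ⟪z, ν⟫) + 2 * k * ρ) := by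
      gcongr
      rw [hm, add_sub_cancel_right]
      positivity
    have hexp_le : η * m * Real.exp (-m * S) ≤ η * m * Real.exp (-m * ⟪z, ν⟫) := by
      gcongr _ * Real.exp ?_
      nlinarith [hz.1.2]
    have hkρ₀ : 0 ≤ 2 * k * ρ := mul_nonneg (by positivity) ((norm_nonneg _).trans hz.2)
    rw [eq_sub_of_add_eq hm.symm] at hlow
    rw [map_sub]
    linarith
  · intro z hz _
    have hz₁ := hW.abs_le_of_le hβ₁ hA (hU z hz).1 (hσ.trans_le (hpos hz).1) hz.1.2
    have hz₂ := hW.abs_le_of_le hβ₁ hA (hU z hz).2 (hσ.trans_le (hpos hz).2)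
      (c := S) (by rw [inner_add_left]; linarith [hz.1.2])
    have := hφη (k := 0) (r := 0) (hσ.le.trans (hpos hz).1) le_rfl
    linarith [(abs_le.1 hz₁).1, (abs_le.1 hz₂).2]
  · intro z hz hzS
    exact (htop z hz hzS).trans (hφη (hzS ▸ hσ.le.trans (hpos hz).1) hk)
  · intro z hz hzσ
    exact .inl ((hbot z hz hzσ).trans (hφη (hzσ ▸ hσ.le.trans (hpos hz).1) hk))

theorem translate_sub_le_of_height_le {ν a : E} {κ σ S hi ρ k η m : ℝ} {W : E → ℝ} {G : E → E}
    {H : E → E →L[ℝ] E} (hν : ‖ν‖ = 1) (hW : IsHalfSpaceApprox ν p β A κ W G H) (hp : 1 ≤ p)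
    (hβ₀ : 0 < β) (hβ₁ : β < 1) (hA : 0 < A) (hσ : 0 < σ) (hS : 0 < S) (ha : ⟪a, ν⟫ ≤ 0)
    (hhi : S + ‖a‖ ≤ hi)
    (hU : ∀ z, ‖z‖ ≤ ρ + ‖a‖ → σ ≤ ⟪z, ν⟫ → z ∈ truncHalfSpace ν κ) (hη : 0 < η) (hk : 0 ≤ k)
    (hkρ : k * ρ ^ 2 = 2 * (A * hi ^ (1 - β))) (hm : m = p * (A * σ ^ (-β)) ^ (p - 1) + 1)
    (hκ : 2 * k * Module.finrank ℝ E + m * (2 * k * ρ) + 2 * κ < η * m * Real.exp (-m * hi))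
    (hSη : A * S ^ (-β) * ‖a‖ ≤ η) (hση : A * σ ^ (1 - β) ≤ η / 2)
    (hneg : ∀ z, ‖z‖ ≤ ρ → σ ≤ ⟪z, ν⟫ → -(η / 2) ≤ W z)
    {x : E} (hx : x ∈ slab ν 0 (σ - ⟪a, ν⟫) hi ρ) : W (x + a) - W x ≤ 2 * η + k * ‖x‖ ^ 2 := by
  have hρ {z : E} (hz : z ∈ slab ν 0 (σ - ⟪a, ν⟫) hi ρ) : ‖z‖ ≤ ρ := by simpa using hz.2
  have haν : -‖a‖ ≤ ⟪a, ν⟫ := by simpa [hν] using (abs_le.1 (abs_real_inner_le_norm a ν)).1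
  have hslab (z : E) (hz : z ∈ slab ν 0 (σ - ⟪a, ν⟫) hi ρ) :
      z ∈ truncHalfSpace ν κ ∧ z + a ∈ truncHalfSpace ν κ := by
    refine ⟨hU z (by linarith [hρ hz, norm_nonneg a]) (by linarith [hz.1.1]), hU _ ?_ ?_⟩
    · exact (norm_add_le _ _).trans (by linarith [hρ hz])
    · rw [inner_add_left]
      linarith [hz.1.1]
  refine translate_sub_le_of_mem_slab hν hW hp hβ₀ hβ₁ hA hσ ha hslab hη hk hkρ hm hκ ?_ ?_ hx
  · intro z hz hzhi
    refine (le_abs_self _).trans ((hW.abs_sub_le hβ₀ hA hS (hslab z hz).2 (hslab z hz).1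
      ?_ ?_).trans (by rwa [add_sub_cancel_left]))
    · rw [inner_add_left]
      linarith
    · linarith [norm_nonneg a]
  · intro z hz hzσ
    have hza : ⟪z + a, ν⟫ = σ := by rw [inner_add_left, hzσ, sub_add_cancel]
    have := hW.abs_le_of_le hβ₁ hA (hslab z hz).2 (hza ▸ hσ) hza.le
    linarith [hneg z (hρ hz) (by linarith), (abs_le.1 this).2]

/-- A translate `W (· + a)` with `⟪a, ν⟫ ≤ 0` lies below `W` near the bottom of the
half-space, where `W` is small, and near its top, where `∇W` is small; the maximum principle
propagates this to the region in between. -/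
theorem eventually_le_add_halfSpaceApprox (hp : 1 ≤ p) (hβ₀ : 0 < β) (hβ₁ : β < 1) (hA : 0 < A)
    (hε : 0 < ε) (hr : 0 < r) (hR : 0 < R) :
    ∀ᶠ κ in 𝓝[>] (0 : ℝ), ∀ (ν : E) (W : E → ℝ) (G : E → E) (H : E → E →L[ℝ] E),
      ‖ν‖ = 1 → IsHalfSpaceApprox ν p β A κ W G H →
      ∀ x y, ‖x‖ ≤ R → ‖y‖ ≤ R → r ≤ ⟪x, ν⟫ → ⟪x, ν⟫ ≤ ⟪y, ν⟫ → W x ≤ W y + ε := by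
  obtain ⟨σ, ⟨hσ₀, hσr⟩, hσ⟩ : ∃ σ ∈ Ioo 0 r, A * σ ^ (1 - β) < ε / 3 / 2 :=
    exists_mul_rpow_lt (sub_pos.2 hβ₁) (by linarith) hr
  obtain ⟨S, -, hS₀, hS⟩ : ∃ S > 0, 0 < S ∧ 2 * R * A * S ^ (-β) < ε / 3 :=
    exists_mul_rpow_neg_lt hβ₀ (by linarith) _
  set m := p * (A * σ ^ (-β)) ^ (p - 1) + 1 with hm
  have : 0 < m := by positivity
  set η := ε / 3 * m * Real.exp (-m * (S + 2 * R))
  have : 0 < η := by positivity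
  obtain ⟨ρ, hρR, k, hk, hkρ, hkη⟩ := exists_quadratic_penalty
    (K := 2 * (A * (S + 2 * R) ^ (1 - β))) (η := min (ε / 3) (η / 2)) (by positivity)
    (by positivity) (R ^ 2 + 2 * Module.finrank ℝ E) (2 * m) R
  obtain ⟨hkε, hkm⟩ := lt_min_iff.1 hkη
  have hρ : 0 < ρ := hR.trans hρR
  filter_upwards [eventually_mem_truncHalfSpace (E := E) (ρ + 2 * R) hσ₀,
    eventually_lt_nhdsGT_zero (c := η / 4) (by positivity),
    eventually_neg_le_halfSpaceApprox (E := E) p hβ₀ hβ₁ hA (ε := ε / 3 / 2) (by linarith) hσ₀ ρ]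
    with κ hU hκ hneg ν W G H hν hW x y hx hy hxr hxy
  have haR : ‖x - y‖ ≤ 2 * R := (norm_sub_le _ _).trans (by linarith)
  have haν : ⟪x - y, ν⟫ = ⟪x, ν⟫ - ⟪y, ν⟫ := inner_sub_left _ _ _
  have hyR : ⟪y, ν⟫ ≤ R := (real_inner_le_norm y ν).trans (by simpa [hν])
  have hkdim : 0 ≤ k * (2 * Module.finrank ℝ E) := by positivity
  have hkR : 0 ≤ k * R ^ 2 := by positivity
  have hmkρ : 0 ≤ 2 * m * (k * ρ) := by positivity
  have hle := translate_sub_le_of_height_le (a := x - y) (x := y) (hi := S + 2 * R) hν hW hp hβ₀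
    hβ₁ hA hσ₀ hS₀ (by linarith) (by linarith) (fun z hz => hU ν z (by linarith))
    (η := ε / 3) (by linarith) hk hkρ hm (by change _ < η; linarith) ?_ hσ.le (hneg ν W G H hν hW)
    ⟨⟨by linarith, by linarith⟩, by simpa using hy.trans hρR.le⟩
  · rw [add_sub_cancel] at hle
    have hky : k * ‖y‖ ^ 2 ≤ k * R ^ 2 := by gcongr
    linarith
  · calc A * S ^ (-β) * ‖x - y‖ ≤ A * S ^ (-β) * (2 * R) := by gcongr
      _ ≤ ε / 3 := by linarith

theorem exists_pos_forall_le_rpow_sub {q : ℝ} (hβ₀ : 0 < β) (hβp : β * p = 1 + β)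
    (hq : β ^ β < q) :
    ∃ c > 0, ∀ t ∈ Ioc (0 : ℝ) 2, ∀ w, q * t ^ (-β) - c ≤ w →
      c ≤ w ^ p - β * q * t ^ (-(1 + β)) := by
  have hp : 1 < p := by nlinarith
  have hq₀ : 0 < q := (Real.rpow_pos_of_pos hβ₀ β).trans hq
  have hqp : β * q < (1 * q) ^ p := by
    have hβ_eq : (β ^ β) ^ (p - 1) = β := by
      rw [← Real.rpow_mul hβ₀.le, show β * (p - 1) = 1 by linarith, Real.rpow_one]
    have hlt := Real.rpow_lt_rpow (by positivity) hq (sub_pos.2 hp)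
    rw [hβ_eq, Real.rpow_sub_one hq₀.ne', lt_div_iff₀ hq₀] at hlt
    rwa [one_mul]
  have hcont : ContinuousAt (fun s => (s * q) ^ p) 1 :=
    ContinuousAt.rpow_const (by fun_prop) (Or.inl (by simpa using hq₀.ne'))
  obtain ⟨ζ, hζp, hζ₀, hζ₁⟩ := ((hcont.eventually_const_lt hqp).filter_mono nhdsWithin_le_nhds).and
    (Ioo_mem_nhdsLT zero_lt_one) |>.exists
  have : 0 < 1 - ζ := sub_pos.2 hζ₁
  have : 0 < (ζ * q) ^ p - β * q := sub_pos.2 hζp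
  refine ⟨min ((1 - ζ) * (q * 2 ^ (-β))) (((ζ * q) ^ p - β * q) * 2 ^ (-(1 + β))),
    lt_min (by positivity) (by positivity), fun t ht w hw => ?_⟩
  have ht₀ : 0 < t := ht.1
  have hanti (γ : ℝ) (hγ : γ ≤ 0) : (2 : ℝ) ^ γ ≤ t ^ γ :=
    Real.rpow_le_rpow_of_nonpos ht.1 ht.2 hγ
  have hw' : ζ * q * t ^ (-β) ≤ w := by
    have : (1 - ζ) * (q * 2 ^ (-β)) ≤ (1 - ζ) * (q * t ^ (-β)) := by
      gcongr (1 - ζ) * (q * ?_)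
      exact hanti _ (by linarith)
    linarith [min_le_left ((1 - ζ) * (q * 2 ^ (-β))) (((ζ * q) ^ p - β * q) * 2 ^ (-(1 + β)))]
  calc _ ≤ ((ζ * q) ^ p - β * q) * 2 ^ (-(1 + β)) := min_le_right _ _
    _ ≤ ((ζ * q) ^ p - β * q) * t ^ (-(1 + β)) := by
      gcongr _ * ?_
      exact hanti _ (by linarith)
    _ = (ζ * q * t ^ (-β)) ^ p - β * q * t ^ (-(1 + β)) := by
      rw [Real.mul_rpow (x := ζ * q) (by positivity) (by positivity), ← Real.rpow_mul ht₀.le,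
        show -β * p = -(1 + β) by linarith]
      ring
    _ ≤ w ^ p - β * q * t ^ (-(1 + β)) := by gcongr

theorem hasDerivAt_rpow_sub_const {θ s : ℝ} (hs : θ < s) (γ : ℝ) :
    HasDerivAt (fun s => (s - θ) ^ γ) (γ * (s - θ) ^ (γ - 1)) s :=
  (((hasDerivAt_id' s).sub_const θ).rpow_const (Or.inl (sub_pos.2 hs).ne')).congr_deriv (by ring)

/-- The one-dimensional profile `U(s) = q / (1 - β) * (s - θ) ^ (1 - β)`, whose derivative is
`q (s - θ) ^ (-β)`. For `q > β ^ β` it satisfies `U'' + (U')ᵖ > 0`. -/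
def profile (q β θ s : ℝ) : ℝ :=
  q / (1 - β) * (s - θ) ^ (1 - β)

theorem hasDerivAt_profile {q θ s : ℝ} (hβ₁ : β < 1) (hs : θ < s) :
    HasDerivAt (profile q β θ) (q * (s - θ) ^ (-β)) s := by
  refine ((hasDerivAt_rpow_sub_const hs (1 - β)).const_mul (q / (1 - β))).congr_deriv ?_
  have := (sub_pos.2 hβ₁).ne'
  rw [show 1 - β - 1 = -β by ring]
  field_simp

theorem profile_le_profile {q θ s t : ℝ} (hq : 0 ≤ q) (hβ₁ : β < 1) (hs : θ ≤ s) (hst : s ≤ t) :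
    profile q β θ s ≤ profile q β θ t := by
  have := sub_pos.2 hβ₁
  have := sub_nonneg.2 hs
  unfold profile
  gcongr

theorem profile_sub_le {q θ r s t : ℝ} (hq : 0 ≤ q) (hβ₀ : 0 ≤ β) (hβ₁ : β < 1) (hr : θ < r)
    (hrs : r ≤ s) (hst : s ≤ t) :
    profile q β θ t - profile q β θ s ≤ q * (r - θ) ^ (-β) * (t - s) := by
  have hmv := (convex_Ici r).norm_image_sub_le_of_norm_hasDerivWithin_le (f := profile q β θ)
    (fun u hu => (hasDerivAt_profile (q := q) hβ₁ (hr.trans_le hu)).hasDerivWithinAt)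
    (C := q * (r - θ) ^ (-β)) (fun u hu => ?_) hrs (hrs.trans hst)
  · rw [Real.norm_of_nonneg (sub_nonneg.2 hst)] at hmv
    exact (le_abs_self _).trans hmv
  · have hu' : r - θ ≤ u - θ := sub_le_sub_right hu θ
    have hrθ := sub_pos.2 hr
    rw [Real.norm_of_nonneg (mul_nonneg hq (Real.rpow_nonneg (hrθ.le.trans hu') _))]
    gcongr q * ?_
    exact Real.rpow_le_rpow_of_nonpos hrθ hu' (by linarith)

theorem exists_profile_parameters {q q' : ℝ} (hβ : 0 < β) (hq : 0 < q) (hqq' : q < q') :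
    ∃ θ ∈ Ioo (0 : ℝ) 4⁻¹, ∃ ς ∈ Ioo (0 : ℝ) 4⁻¹,
      q * (1 - θ - θ) ^ (-β) < q' ∧ A * θ ^ (-β) < q * ς ^ (-β) := by
  have hcont : ContinuousAt (fun θ : ℝ => q * (1 - θ - θ) ^ (-β)) 0 :=
    continuousAt_const.mul (ContinuousAt.rpow_const (by fun_prop) (Or.inl (by norm_num)))
  obtain ⟨θ, hθq, hθ⟩ := (((hcont.eventually_lt_const (by simpa using hqq')).filter_mono
    nhdsWithin_le_nhds).and (Ioo_mem_nhdsGT (show (0 : ℝ) < 4⁻¹ by norm_num))).exists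
  obtain ⟨ς, hςA, hς⟩ := (((tendsto_rpow_neg_nhdsGT_zero (neg_lt_zero.2 hβ)).const_mul_atTop
    hq).eventually_gt_atTop (A * θ ^ (-β))).and
    (Ioo_mem_nhdsGT (show (0 : ℝ) < 4⁻¹ by norm_num)) |>.exists
  exact ⟨θ, hθ, ς, hς, hθq, hςA⟩

theorem sub_le_profile_of_mem_slab {ν y : E} {κ θ ς q c k ρ η : ℝ} {W : E → ℝ} {G : E → E}
    {H : E → E →L[ℝ] E} (hν : ‖ν‖ = 1) (hW : IsHalfSpaceApprox ν p β A κ W G H) (hβ₀ : 0 < β)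
    (hβ₁ : β < 1) (hA : 0 < A) (hq : 0 < q) (hθ : 0 < θ) (hς : 0 < ς) (hη : 0 ≤ η)
    (hc : ∀ t ∈ Ioc (0 : ℝ) 2, ∀ w, q * t ^ (-β) - c ≤ w → c ≤ w ^ p - β * q * t ^ (-(1 + β)))
    (hςA : A * θ ^ (-β) < q * ς ^ (-β)) (hk : 0 ≤ k) (hkρ : k * ρ ^ 2 = 2 * (A * 2 ^ (1 - β)))
    (hkc : 2 * (k * ρ) ≤ c) (hκ : 2 * k * Module.finrank ℝ E + κ < c)
    (hU : slab ν y (θ + ς) ⟪y, ν⟫ ρ ⊆ truncHalfSpace ν κ) (hy : ‖y‖ ≤ 2) (hyθ : θ + ς ≤ ⟪y, ν⟫)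
    (htop : ∀ z ∈ slab ν y (θ + ς) ⟪y, ν⟫ ρ, ⟪z, ν⟫ = ⟪y, ν⟫ → W y - W z ≤ η) {x : E}
    (hx : x ∈ slab ν y (θ + ς) ⟪y, ν⟫ ρ) :
    W y - W x ≤ η + (profile q β θ ⟪y, ν⟫ - profile q β θ ⟪x, ν⟫) + k * ‖x - y‖ ^ 2 := by
  have hφ (s : ℝ) (hs : θ < s) :
      HasDerivAt (fun s => η + (profile q β θ ⟪y, ν⟫ - profile q β θ s))
        (-(q * (s - θ) ^ (-β))) s :=
    ((hasDerivAt_profile hβ₁ hs).const_sub _).const_add η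
  have hφ' (s : ℝ) (hs : θ < s) :
      HasDerivAt (fun s => -(q * (s - θ) ^ (-β))) (β * q * (s - θ) ^ (-(1 + β))) s :=
    ((hasDerivAt_rpow_sub_const hs (-β)).const_mul q).fun_neg.congr_deriv
      (by rw [show -β - 1 = -(1 + β) by ring]; ring)
  have hρ : 0 ≤ ρ := (norm_nonneg _).trans hx.2
  have hyν : ⟪y, ν⟫ ≤ 2 := (real_inner_le_norm y ν).trans (by simpa [hν])
  have hyU : y ∈ slab ν y (θ + ς) ⟪y, ν⟫ ρ := ⟨⟨hyθ, le_rfl⟩, by simpa using hρ⟩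
  have habs {z : E} (hz : z ∈ slab ν y (θ + ς) ⟪y, ν⟫ ρ) : |W z| ≤ A * 2 ^ (1 - β) :=
    hW.abs_le_of_le hβ₁ hA (hU hz) (by linarith [hz.1.1]) (hz.1.2.trans hyν)
  refine le_barrier_of_mem_slab hν (lt_add_of_pos_right θ hς) hφ hφ' (y := y)
    (v := fun z => W y - W z) (k := k) (fun z hz => (hW.hasGradHessAt z (hU hz)).const_sub (W y))
    ?_ ?_ ?_ ?_ hx
  · intro z hz hcrit _
    have ht : 0 < ⟪z, ν⟫ - θ := by linarith [hz.1.1]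
    have hG : q * (⟪z, ν⟫ - θ) ^ (-β) - c ≤ ‖G z‖ := by
      have hnorm := norm_sub_norm_le ((q * (⟪z, ν⟫ - θ) ^ (-β)) • ν) ((2 * k) • (z - y))
      rw [show (q * (⟪z, ν⟫ - θ) ^ (-β)) • ν - (2 * k) • (z - y) = G z by
          rw [neg_eq_iff_eq_neg.1 hcrit]; module, norm_smul, norm_smul, hν, mul_one,
        Real.norm_of_nonneg (by positivity), Real.norm_of_nonneg (by positivity)] at hnorm
      have : k * ‖z - y‖ ≤ k * ρ := mul_le_mul_of_nonneg_left hz.2 hk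
      linarith
    have := hc _ ⟨ht, by linarith [hz.1.2]⟩ _ hG
    rw [map_neg]
    linarith [(abs_le.1 (hW.abs_traceCLM_add_le z (hU hz))).2]
  · intro z hz _
    have := profile_le_profile (θ := θ) hq.le hβ₁ (by linarith [hz.1.1]) hz.1.2
    linarith [(abs_le.1 (habs hz)).1, (abs_le.1 (habs hyU)).2]
  · intro z hz hzy
    have := mul_nonneg hk (sq_nonneg ‖z - y‖)
    linarith [htop z hz hzy]
  · intro z hz hzy
    right
    have hG : ⟪G z, ν⟫ ≤ A * θ ^ (-β) := by
      refine (real_inner_le_norm _ _).trans ?_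
      rw [hν, mul_one]
      exact hW.norm_le_of_le hβ₀ hA hθ (hU hz) (by linarith)
    have : k * (⟪z, ν⟫ - ⟪y, ν⟫) ≤ 0 := mul_nonpos_of_nonneg_of_nonpos hk (by linarith [hz.1.2])
    rw [add_sub_cancel_left, inner_neg_left, inner_sub_left]
    linarith

/-- The comparison function is the strict subsolution `profile q β θ` with `q > β ^ β`, whose
slope at the lower boundary exceeds the a priori gradient bound. -/
theorem exists_eventually_sub_le_halfSpaceApprox {q : ℝ} (hβ₀ : 0 < β) (hβ₁ : β < 1)
    (hβp : β * p = 1 + β) (hA : 0 < A) (hq : β ^ β < q) :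
    ∃ θ ∈ Ioo (0 : ℝ) 4⁻¹, ∀ ε > 0, ∀ᶠ κ in 𝓝[>] (0 : ℝ),
      ∀ (ν : E) (W : E → ℝ) (G : E → E) (H : E → E →L[ℝ] E),
      ‖ν‖ = 1 → IsHalfSpaceApprox ν p β A κ W G H →
      ∀ x y, ‖x‖ ≤ 2 → ‖y‖ ≤ 2 → 1 - θ ≤ ⟪x, ν⟫ → ⟪x, ν⟫ ≤ ⟪y, ν⟫ →
      W y - W x ≤ q * (⟪y, ν⟫ - ⟪x, ν⟫) + ε := by
  obtain ⟨q₁, hq₁, hq₁q⟩ := exists_between hq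
  have hq₁₀ : 0 < q₁ := (Real.rpow_pos_of_pos hβ₀ β).trans hq₁
  obtain ⟨θ, hθ, ς, ⟨hς₀, hς₁⟩, hθq, hςA⟩ := exists_profile_parameters (A := A) hβ₀ hq₁₀ hq₁q
  obtain ⟨hθ₀, hθ₁⟩ := hθ
  refine ⟨θ, ⟨hθ₀, hθ₁⟩, fun ε hε => ?_⟩
  obtain ⟨c, hc₀, hc⟩ := exists_pos_forall_le_rpow_sub hβ₀ hβp hq₁
  obtain ⟨ρ, hρ, k, hk, hkρ, hkη⟩ := exists_quadratic_penalty (K := 2 * (A * 2 ^ (1 - β)))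
    (η := min (ε / 2) (c / 2)) (by positivity) (by positivity)
    (4 ^ 2 + 2 * Module.finrank ℝ E) 2 4
  obtain ⟨hkε, hkc⟩ := lt_min_iff.1 hkη
  filter_upwards [eventually_mem_truncHalfSpace (E := E) (ρ + 2) (add_pos hθ₀ hς₀),
    eventually_lt_nhdsGT_zero (half_pos hc₀),
    eventually_le_add_halfSpaceApprox (E := E) (p := p) (by nlinarith) hβ₀ hβ₁ hA (half_pos hε)
      (add_pos hθ₀ hς₀) (R := ρ + 2) (by linarith)]
    with κ hU hκ hmono ν W G H hν hW x y hx hy hxθ hxy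
  have hxy4 : ‖x - y‖ ≤ 4 := (norm_sub_le _ _).trans (by linarith)
  have hnorm {z : E} (hz : z ∈ slab ν y (θ + ς) ⟪y, ν⟫ ρ) : ‖z‖ ≤ ρ + 2 := by
    have := norm_add_le (z - y) y
    rw [sub_add_cancel] at this
    linarith [hz.2]
  have hkdim : 0 ≤ k * (2 * Module.finrank ℝ E) := by positivity
  have hkρ₀ : 0 ≤ k * ρ := mul_nonneg hk (by linarith)
  have hle := sub_le_profile_of_mem_slab (x := x) hν hW hβ₀ hβ₁ hA hq₁₀ hθ₀ hς₀ (half_pos hε).le hc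
    hςA hk hkρ (by linarith) (by linarith) (fun z hz => hU ν z (hnorm hz) hz.1.1) hy (by linarith)
    (fun z hz hzy => by
      linarith [hmono ν W G H hν hW y z (by linarith) (hnorm hz) (by linarith) hzy.ge])
    ⟨⟨by linarith, hxy⟩, hxy4.trans hρ.le⟩
  have hkx : k * ‖x - y‖ ^ 2 ≤ k * 4 ^ 2 := by gcongr
  have hslope : profile q₁ β θ ⟪y, ν⟫ - profile q₁ β θ ⟪x, ν⟫ ≤ q * (⟪y, ν⟫ - ⟪x, ν⟫) :=
    (profile_sub_le hq₁₀.le hβ₀.le hβ₁ (by linarith) hxθ hxy).trans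
      (mul_le_mul_of_nonneg_right hθq.le (sub_nonneg.2 hxy))
  linarith

theorem IsApproxSolution.abs_traceCLM_le {U : Set E} {d : E → ℝ} {M B : ℝ} {v : E → ℝ}
    {g : E → E} {h : E → E →L[ℝ] E} (hv : IsApproxSolution U d p β A M v g h) (hp : 0 ≤ p)
    {x : E} (hx : x ∈ U) (hgx : ‖g x‖ ≤ B) : |traceCLM (h x)| ≤ B ^ p + M := by
  have heq := abs_le.1 (hv.abs_traceCLM_add_le x hx)
  have hpow : ‖g x‖ ^ p ≤ B ^ p := Real.rpow_le_rpow (norm_nonneg _) hgx hp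
  have hpow₀ : 0 ≤ ‖g x‖ ^ p := by positivity
  exact abs_le.2 ⟨by linarith, by linarith⟩

theorem exists_eventually_sub_le_mul_norm_halfSpaceApprox {q : ℝ} (hβ₀ : 0 < β) (hβ₁ : β < 1)
    (hβp : β * p = 1 + β) (hA : 0 < A) (hq : β ^ β < q) :
    ∃ θ ∈ Ioo (0 : ℝ) 2⁻¹, ∀ ε > 0, ∀ᶠ κ in 𝓝[>] (0 : ℝ),
      ∀ (ν : E) (W : E → ℝ) (G : E → E) (H : E → E →L[ℝ] E),
      ‖ν‖ = 1 → IsHalfSpaceApprox ν p β A κ W G H →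
      ∀ x ∈ closedBall ν θ, ∀ y ∈ closedBall ν θ, W x - W y ≤ q * ‖x - y‖ + ε := by
  obtain ⟨θ, ⟨hθ₀, hθ⟩, hup⟩ :=
    exists_eventually_sub_le_halfSpaceApprox (E := E) hβ₀ hβ₁ hβp hA hq
  have hq₀ : 0 < q := (Real.rpow_pos_of_pos hβ₀ β).trans hq
  refine ⟨θ, ⟨hθ₀, by linarith⟩, fun ε hε => ?_⟩
  filter_upwards [hup ε hε, eventually_le_add_halfSpaceApprox (E := E) (p := p) (by nlinarith)
    hβ₀ hβ₁ hA hε (show (0 : ℝ) < 2⁻¹ by norm_num) (show (0 : ℝ) < 2 by norm_num)]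
    with κ hslope hmono ν W G H hν hW x hx y hy
  obtain ⟨hx₂, hxν⟩ := norm_le_and_abs_inner_sub_one_le hν hx
  obtain ⟨hy₂, hyν⟩ := norm_le_and_abs_inner_sub_one_le hν hy
  rw [abs_le] at hxν hyν
  rcases le_total ⟪x, ν⟫ ⟪y, ν⟫ with hxy | hyx
  · have : 0 ≤ q * ‖x - y‖ := by positivity
    linarith [hmono ν W G H hν hW x y (by linarith) (by linarith) (by linarith) hxy]
  · have hinner : ⟪x, ν⟫ - ⟪y, ν⟫ ≤ ‖x - y‖ := by
      simpa [inner_sub_left, hν] using real_inner_le_norm (x - y) ν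
    have := mul_le_mul_of_nonneg_left hinner hq₀.le
    linarith [hslope ν W G H hν hW y x (by linarith) (by linarith) (by linarith) hyx]

/-- `β ^ β` is the slope at height one of the exact solution `s ↦ β ^ β * s ^ (1 - β) / (1 - β)`. -/
theorem eventually_norm_le_halfSpaceApprox {q : ℝ} (hβ₀ : 0 < β) (hβ₁ : β < 1)
    (hβp : β * p = 1 + β) (hA : 0 < A) (hq : β ^ β < q) :
    ∀ᶠ κ in 𝓝[>] (0 : ℝ), ∀ (ν : E) (W : E → ℝ) (G : E → E) (H : E → E →L[ℝ] E),
      ‖ν‖ = 1 → IsHalfSpaceApprox ν p β A κ W G H → ‖G ν‖ ≤ q := by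
  obtain ⟨q₁, hq₁, hq₁q⟩ := exists_between hq
  have hq₁₀ : 0 < q₁ := (Real.rpow_pos_of_pos hβ₀ β).trans hq₁
  obtain ⟨θ₁, ⟨hθ₁₀, hθ₁⟩, hosc⟩ :=
    exists_eventually_sub_le_mul_norm_halfSpaceApprox (E := E) hβ₀ hβ₁ hβp hA hq₁
  set N := (A * 2⁻¹ ^ (-β)) ^ p + 1
  have hN₀ : 0 < N := by positivity
  obtain ⟨θ, ⟨hθ₀, hθ⟩, hθN⟩ : ∃ θ ∈ Ioc 0 θ₁, (N + 2) * θ ≤ q - q₁ :=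
    ⟨min θ₁ ((q - q₁) / (N + 2)), ⟨lt_min hθ₁₀ (div_pos (sub_pos.2 hq₁q) (by linarith)),
      min_le_left _ _⟩, (le_div_iff₀' (by linarith)).1 (min_le_right _ _)⟩
  set η := θ ^ 2 / (Module.finrank ℝ E + 1 : ℝ) with hη
  have hη₀ : 0 < η := by positivity
  have hηdim : η / θ ^ 2 * Module.finrank ℝ E ≤ 1 := by
    rw [hη, div_div_cancel_left' (by positivity), inv_mul_le_one₀ (by positivity)]
    linarith
  filter_upwards [eventually_mem_truncHalfSpace (E := E) 2 (show (0 : ℝ) < 2⁻¹ by norm_num),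
    eventually_lt_nhdsGT_zero one_pos, hosc η hη₀] with κ hU hκ hosc ν W G H hν hW
  have hball {z : E} (hz : z ∈ closedBall ν θ) : z ∈ truncHalfSpace ν κ ∧ 2⁻¹ ≤ ⟪z, ν⟫ := by
    obtain ⟨hz₂, hzν⟩ := norm_le_and_abs_inner_sub_one_le hν hz
    have hzν : 2⁻¹ ≤ ⟪z, ν⟫ := by linarith [(abs_le.1 hzν).1]
    exact ⟨hU ν z (by linarith) hzν, hzν⟩
  have hN (z : E) (hz : z ∈ closedBall ν θ) : |traceCLM (H z)| ≤ N :=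
    (hW.abs_traceCLM_le (by nlinarith) (hball hz).1
      (hW.norm_le_of_le hβ₀ hA (by norm_num) (hball hz).1 (hball hz).2)).trans
      (add_le_add_right hκ.le _)
  have hle := norm_gradient_le_of_forall_sub_le hθ₀ hq₁₀.le hη₀.le
    (fun z hz => hW.hasGradHessAt z (hball hz).1) hN
    (fun x hx y hy => hosc ν W G H hν hW x (closedBall_subset_closedBall hθ hx) y
      (closedBall_subset_closedBall hθ hy))
  nlinarith

end ApproximateSolutions

section DistanceToFrontier

theorem infDist_frontier_pos {X : Type*} [PseudoMetricSpace X] {Ω : Set X} {x : X}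
    (hΩ : IsOpen Ω) (hne : (frontier Ω).Nonempty) (hx : x ∈ Ω) : 0 < infDist x (frontier Ω) :=
  (isClosed_frontier.notMem_iff_infDist_pos hne).1 fun hxf => (hΩ.frontier_eq ▸ hxf).2 hx

theorem exists_forall_infDist_le_of_isBounded {X : Type*} [PseudoMetricSpace X] {Ω : Set X}
    (hb : Bornology.IsBounded Ω) (s : Set X) : ∃ D > 0, ∀ x ∈ Ω, infDist x s ≤ D := by
  obtain ⟨D, hD, hle⟩ := ((lipschitz_infDist_pt s).isBounded_image hb).exists_pos_norm_le
  exact ⟨D, hD, fun x hx => (le_abs_self _).trans (hle _ (mem_image_of_mem _ hx))⟩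

variable {E : Type*} [NormedAddCommGroup E] [NormedSpace ℝ E] {Ω s : Set E} {x b : E}

theorem ball_infDist_frontier_subset (hΩ : IsOpen Ω) (hx : x ∈ Ω) :
    ball x (infDist x (frontier Ω)) ⊆ Ω := by
  intro z hz
  refine (convex_ball x _).isPreconnected.subset_of_closure_inter_subset hΩ
    ⟨x, mem_ball_self (pos_of_mem_ball hz), hx⟩ ?_ hz
  rintro y ⟨hy, hyx⟩
  by_contra hyΩ
  rw [mem_ball'] at hyx
  exact hyx.not_ge (infDist_le_dist_of_mem (hΩ.frontier_eq ▸ ⟨hy, hyΩ⟩))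

theorem nonempty_frontier_of_isBounded [Nontrivial E] (hb : Bornology.IsBounded Ω)
    (hne : Ω.Nonempty) : (frontier Ω).Nonempty :=
  nonempty_frontier_iff.2 ⟨hne, fun h => NormedSpace.unbounded_univ ℝ E (h ▸ hb)⟩

theorem infDist_lineMap (hb : b ∈ s) (hx : dist x b = infDist x s) {t : ℝ} (ht : t ∈ Icc 0 1) :
    infDist (AffineMap.lineMap x b t) s = (1 - t) * infDist x s := by
  apply le_antisymm
  · refine (infDist_le_dist_of_mem hb).trans_eq ?_
    rw [dist_lineMap_right, hx, Real.norm_of_nonneg (by linarith [ht.2])]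
  · have := infDist_le_infDist_add_dist (s := s) (x := x) (y := AffineMap.lineMap x b t)
    rw [dist_left_lineMap, hx, Real.norm_of_nonneg ht.1] at this
    linarith

theorem lineMap_mem_of_dist_eq_infDist_frontier (hΩ : IsOpen Ω) (hx : x ∈ Ω)
    (hxb : dist x b = infDist x (frontier Ω)) {t : ℝ} (ht : t ∈ Ico 0 1) :
    AffineMap.lineMap x b t ∈ Ω := by
  rcases (infDist_nonneg (x := x) (s := frontier Ω)).eq_or_lt with h | h
  · rw [← h, dist_eq_zero] at hxb
    simpa [← hxb]
  · apply ball_infDist_frontier_subset hΩ hx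
    rw [mem_ball, dist_lineMap_left, hxb, Real.norm_of_nonneg ht.1]
    nlinarith [ht.2]

end DistanceToFrontier

section InwardNormal

variable {E : Type*} [NormedAddCommGroup E] [InnerProductSpace ℝ E] {Ω s : Set E} {x b : E}

theorem eq_add_infDist_smul_of_hasGradientAt [CompleteSpace E] {e : E} (hb : b ∈ s)
    (hx : dist x b = infDist x s) (he : ‖e‖ = 1)
    (hgrad : HasGradientAt (fun y => infDist y s) e x) : x = b + infDist x s • e := by
  have hline : HasDerivAt (fun t : ℝ => infDist (AffineMap.lineMap x b t) s) ⟪e, b - x⟫ 0 := by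
    rw [hasGradientAt_iff_hasFDerivAt] at hgrad
    refine (HasFDerivAt.comp_hasDerivAt (0 : ℝ) (f := AffineMap.lineMap x b)
      (l := fun y => infDist y s) (l' := InnerProductSpace.toDual ℝ E e) ?_
      AffineMap.hasDerivAt_lineMap).congr_deriv (by simp)
    simpa using hgrad
  have hlinear : HasDerivWithinAt (fun t : ℝ => infDist (AffineMap.lineMap x b t) s)
      (-infDist x s) (Icc 0 1) 0 := by
    refine HasDerivWithinAt.congr (f := fun t : ℝ => (1 - t) * infDist x s) ?_
      (fun t ht => infDist_lineMap hb hx ht) (by simp)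
    exact ((((hasDerivAt_id' (0 : ℝ)).const_sub 1).mul_const _).congr_deriv
      (by ring)).hasDerivWithinAt
  have hinner : ⟪e, b - x⟫ = -infDist x s :=
    (uniqueDiffOn_Icc_zero_one 0 (by simp)).eq_deriv _ hline.hasDerivWithinAt hlinear
  have hcos : ⟪e, x - b⟫ = ‖e‖ * ‖x - b‖ := by
    rw [he, one_mul, ← dist_eq_norm, hx, ← neg_sub b x, inner_neg_right, hinner, neg_neg]
  rw [inner_eq_norm_mul_iff_real, he, one_smul, ← dist_eq_norm, hx] at hcos
  rw [hcos, add_sub_cancel]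

theorem norm_sub_smul_le {ν : E} {t : ℝ} (hν : ‖ν‖ = 1) (ht : 0 < t) (w : E) :
    ‖w - t • ν‖ ≤ t - ⟪w, ν⟫ + ‖w‖ ^ 2 / (2 * t) := by
  have hsq : ‖w - t • ν‖ ^ 2 = ‖w‖ ^ 2 - 2 * t * ⟪w, ν⟫ + t ^ 2 := by
    rw [norm_sub_sq_real, real_inner_smul_right, norm_smul, hν, mul_one, Real.norm_eq_abs, sq_abs]
    ring
  calc ‖w - t • ν‖ ≤ (‖w - t • ν‖ ^ 2 + t ^ 2) / (2 * t) := by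
        rw [le_div_iff₀ (by positivity)]
        nlinarith [sq_nonneg (‖w - t • ν‖ - t)]
    _ = t - ⟪w, ν⟫ + ‖w‖ ^ 2 / (2 * t) := by
        rw [hsq]
        field_simp
        ring

/-- `ν` is an inward unit normal field for `Ω` in the sense needed here, up to depth `r`: moving
from a boundary point `b` by `s < r` along `ν b` leads to a point of `Ω` at distance exactly `s`
from the boundary, and every point of `Ω` at distance less than `r` from the boundary lies on the
normal through each of its nearest boundary points. Values of `ν` off `∂Ω` are irrelevant. -/
structure IsInwardNormal (Ω : Set E) (r : ℝ) (ν : E → E) : Prop where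
  norm_eq_one : ∀ b ∈ frontier Ω, ‖ν b‖ = 1
  add_smul_mem : ∀ b ∈ frontier Ω, ∀ s ∈ Ioo 0 r, b + s • ν b ∈ Ω
  infDist_add_smul : ∀ b ∈ frontier Ω, ∀ s ∈ Ioo 0 r, infDist (b + s • ν b) (frontier Ω) = s
  eq_add_infDist_smul : ∀ x ∈ Ω, infDist x (frontier Ω) < r → ∀ b ∈ frontier Ω,
    dist x b = infDist x (frontier Ω) → x = b + infDist x (frontier Ω) • ν b

namespace IsInwardNormal

variable {r t : ℝ} {ν : E → E} {y z : E}

theorem of_hasGradientAt [CompleteSpace E]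
    (hν : ∀ b ∈ frontier Ω, ‖ν b‖ = 1 ∧
      ∀ s ∈ Ioo 0 r, b + s • ν b ∈ Ω ∧ infDist (b + s • ν b) (frontier Ω) = s)
    (hgrad : ∀ x ∈ Ω, infDist x (frontier Ω) < r → ∀ b ∈ frontier Ω,
      dist x b = infDist x (frontier Ω) →
        HasGradientAt (fun y => infDist y (frontier Ω)) (ν b) x) :
    IsInwardNormal Ω r ν where
  norm_eq_one b hb := (hν b hb).1
  add_smul_mem b hb s hs := ((hν b hb).2 s hs).1
  infDist_add_smul b hb s hs := ((hν b hb).2 s hs).2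
  eq_add_infDist_smul x hx hxr b hb hxb :=
    eq_add_infDist_smul_of_hasGradientAt hb hxb (hν b hb).1 (hgrad x hx hxr b hb hxb)

theorem mem_and_le_infDist (hν : IsInwardNormal Ω r ν) (hΩ : IsOpen Ω) (hb : b ∈ frontier Ω)
    (ht : t ∈ Ioo 0 r) (hz : ‖z - b‖ ^ 2 / (2 * t) < ⟪z - b, ν b⟫) :
    z ∈ Ω ∧ ⟪z - b, ν b⟫ - ‖z - b‖ ^ 2 / (2 * t) ≤ infDist z (frontier Ω) := by
  have hdist := norm_sub_smul_le (hν.norm_eq_one b hb) ht.1 (z - b)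
  rw [sub_sub, ← dist_eq_norm] at hdist
  have hcenter := hν.infDist_add_smul b hb t ht
  constructor
  · apply ball_infDist_frontier_subset hΩ (hν.add_smul_mem b hb t ht)
    rw [hcenter, mem_ball]
    linarith
  · have := infDist_le_infDist_add_dist (s := frontier Ω) (x := b + t • ν b) (y := z)
    rw [hcenter, dist_comm] at this
    linarith

theorem inner_sub_le (hν : IsInwardNormal Ω r ν) (hb : b ∈ frontier Ω) (hy : y ∈ frontier Ω)
    (ht : t ∈ Ioo 0 r) : ⟪b - y, ν y⟫ ≤ ‖b - y‖ ^ 2 / (2 * t) := by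
  have hdist := norm_sub_smul_le (hν.norm_eq_one y hy) ht.1 (b - y)
  rw [sub_sub, ← dist_eq_norm, dist_comm] at hdist
  have := infDist_le_dist_of_mem (x := y + t • ν y) hb
  rw [hν.infDist_add_smul y hy t ht] at this
  linarith

theorem infDist_le (hν : IsInwardNormal Ω r ν) (hb : b ∈ frontier Ω) (hy : y ∈ frontier Ω)
    (hz : z ∈ Ω) (hzr : infDist z (frontier Ω) < r) (hzy : dist z y = infDist z (frontier Ω))
    (ht : t ∈ Ioo 0 r) :
    infDist z (frontier Ω) ≤
      ⟪z - b, ν b⟫ + ‖z - b‖ * ‖ν y - ν b‖ + ‖b - y‖ ^ 2 / (2 * t) := by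
  have hproj : infDist z (frontier Ω) = ⟪z - y, ν y⟫ := by
    conv_rhs => rw [hν.eq_add_infDist_smul z hz hzr y hy hzy]
    simp [real_inner_smul_left, hν.norm_eq_one y hy]
  calc infDist z (frontier Ω) = ⟪z - b, ν b⟫ + ⟪z - b, ν y - ν b⟫ + ⟪b - y, ν y⟫ := by
        rw [hproj, ← sub_add_sub_cancel z b y, inner_add_left, inner_sub_right]
        ring
    _ ≤ _ := by
        gcongr
        · exact real_inner_le_norm _ _
        · exact hν.inner_sub_le hb hy ht

variable [FiniteDimensional ℝ E]

/-- A limit `e` of normals `ν b'` as `b' → b` still satisfies `δ(b + (r/2) e) = r/2`, and `b` is a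
nearest boundary point of `b + (r/2) e`, so that `e = ν b`. -/
theorem continuousOn (hν : IsInwardNormal Ω r ν) (hr : 0 < r) (hΩ : IsOpen Ω) :
    ContinuousOn ν (frontier Ω) := by
  intro b hb
  have hr₂ : r / 2 ∈ Ioo 0 r := ⟨by linarith, by linarith⟩
  refine (isCompact_sphere (0 : E) 1).tendsto_nhds_of_unique_mapClusterPt ?_ fun e he hclus => ?_
  · filter_upwards [self_mem_nhdsWithin] with b' hb'
    simpa using hν.norm_eq_one b' hb'
  obtain ⟨F, hF, hFe⟩ := mapClusterPt_iff_ultrafilter.1 hclus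
  have hfrontier : ∀ᶠ b' in (F : Filter E), b' ∈ frontier Ω := hF self_mem_nhdsWithin
  have hlim : Tendsto (fun b' => b' + (r / 2) • ν b') F (𝓝 (b + (r / 2) • e)) :=
    (tendsto_id'.2 (hF.trans nhdsWithin_le_nhds)).add (Tendsto.const_smul hFe _)
  have hclosure : b + (r / 2) • e ∈ closure Ω := mem_closure_of_tendsto hlim <|
    hfrontier.mono fun b' hb' => hν.add_smul_mem b' hb' _ hr₂
  have hinf : infDist (b + (r / 2) • e) (frontier Ω) = r / 2 :=
    tendsto_nhds_unique (((continuous_infDist_pt _).tendsto _).comp hlim) <|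
      tendsto_const_nhds.congr' <| hfrontier.mono fun b' hb' =>
        (hν.infDist_add_smul b' hb' _ hr₂).symm
  have hmem : b + (r / 2) • e ∈ Ω := by
    by_contra hnot
    have hfr : b + (r / 2) • e ∈ frontier Ω := hΩ.frontier_eq ▸ ⟨hclosure, hnot⟩
    linarith [infDist_zero_of_mem hfr, hr₂.1]
  have heq := hν.eq_add_infDist_smul _ hmem (hinf.trans_lt hr₂.2) b hb <| by
    rw [hinf, dist_self_add_left, norm_smul, mem_sphere_zero_iff_norm.1 he, mul_one,
      Real.norm_of_nonneg hr₂.1.le]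
  rw [hinf] at heq
  exact smul_right_injective E hr₂.1.ne' (add_left_cancel heq)

theorem exists_forall_norm_sub_lt (hν : IsInwardNormal Ω r ν) (hr : 0 < r) (hΩ : IsOpen Ω)
    (hb : Bornology.IsBounded Ω) {η : ℝ} (hη : 0 < η) :
    ∃ ρ > 0, ∀ b ∈ frontier Ω, ∀ y ∈ frontier Ω, ‖y - b‖ < ρ → ‖ν y - ν b‖ < η := by
  have hcompact : IsCompact (frontier Ω) :=
    isCompact_of_isClosed_isBounded isClosed_frontier (hb.closure.subset frontier_subset_closure)
  obtain ⟨ρ, hρ, hlt⟩ := uniformContinuousOn_iff.1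
    (hcompact.uniformContinuousOn_of_continuous (hν.continuousOn hr hΩ)) η hη
  simp only [dist_eq_norm] at hlt
  exact ⟨ρ, hρ, fun b hb y hy h => hlt y hy b hb h⟩

theorem exists_mem_and_infDist_bounds (hν : IsInwardNormal Ω r ν) (hr : 0 < r) (hΩ : IsOpen Ω)
    (hbdd : Bornology.IsBounded Ω) {η : ℝ} (hη : 0 < η) :
    ∃ ρ > 0, ∀ b ∈ frontier Ω, ∀ z, ‖z - b‖ < ρ → η * ‖z - b‖ ≤ ⟪z - b, ν b⟫ →
      0 < ⟪z - b, ν b⟫ → z ∈ Ω ∧ ⟪z - b, ν b⟫ / 2 ≤ infDist z (frontier Ω) ∧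
        infDist z (frontier Ω) ≤ 2 * ⟪z - b, ν b⟫ := by
  obtain ⟨ρ, hρ, hosc⟩ := hν.exists_forall_norm_sub_lt hr hΩ hbdd (half_pos hη)
  refine ⟨min (ρ / 2) (min (r * η / 8) r), by positivity, fun b hb z hz hcone hpos => ?_⟩
  obtain ⟨hzρ, hzη, hzr⟩ : ‖z - b‖ < ρ / 2 ∧ ‖z - b‖ < r * η / 8 ∧ ‖z - b‖ < r := by
    simpa only [lt_min_iff] using hz
  have ht : r / 2 ∈ Ioo 0 r := ⟨by linarith, by linarith⟩
  have hquad : ‖z - b‖ ^ 2 / r ≤ ⟪z - b, ν b⟫ / 8 := by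
    rw [div_le_iff₀ hr]
    nlinarith [norm_nonneg (z - b)]
  obtain ⟨hzΩ, hlower⟩ := hν.mem_and_le_infDist hΩ hb ht (z := z) <| by
    rw [mul_div_cancel₀ r two_ne_zero]; linarith
  rw [mul_div_cancel₀ r two_ne_zero] at hlower
  refine ⟨hzΩ, by linarith, ?_⟩
  have hle : infDist z (frontier Ω) ≤ ‖z - b‖ := by
    simpa only [dist_eq_norm] using infDist_le_dist_of_mem (x := z) hb
  obtain ⟨y, hy, hzy⟩ := isClosed_frontier.exists_infDist_eq_dist ⟨b, hb⟩ z
  have hby : ‖b - y‖ ≤ 2 * ‖z - b‖ := by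
    have := dist_triangle b z y
    rw [← hzy, dist_comm b z, dist_eq_norm, dist_eq_norm] at this
    linarith
  have hupper := hν.infDist_le hb hy hzΩ (hle.trans_lt hzr) hzy.symm ht
  have hνy : ‖z - b‖ * ‖ν y - ν b‖ ≤ ‖z - b‖ * (η / 2) := by
    gcongr
    exact (hosc b hb y hy (by rw [norm_sub_rev]; linarith)).le
  have hby_sq : ‖b - y‖ ^ 2 / (2 * (r / 2)) ≤ 4 * (‖z - b‖ ^ 2 / r) := by
    rw [mul_div_cancel₀ r two_ne_zero, ← mul_div_assoc]
    gcongr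
    nlinarith [norm_nonneg (b - y)]
  linarith

end IsInwardNormal

end InwardNormal

section IntegrationFromFrontier

variable {E : Type*} [NormedAddCommGroup E] [InnerProductSpace ℝ E] [FiniteDimensional ℝ E]

/-- Integrate the gradient along the segment to a nearest boundary point. -/
theorem abs_le_mul_infDist_frontier_rpow {Ω : Set E} {v : E → ℝ} {g : E → E} {A C β : ℝ}
    (hΩ : IsOpen Ω) (hne : (frontier Ω).Nonempty) (hβ : β < 1) (hv : ContinuousOn v (closure Ω))
    (hv₀ : ∀ b ∈ frontier Ω, v b = 0) (hg : ∀ x ∈ Ω, HasGradientAt v (g x) x)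
    (hle : ∀ x ∈ Ω, ‖g x‖ ≤ A * infDist x (frontier Ω) ^ (-β) + C) {x : E} (hx : x ∈ Ω) :
    |v x| ≤ A / (1 - β) * infDist x (frontier Ω) ^ (1 - β) + C * infDist x (frontier Ω) := by
  obtain ⟨b, hb, hxb⟩ := isClosed_frontier.exists_infDist_eq_dist hne x
  have hd := infDist_frontier_pos hΩ hne hx
  set d := infDist x (frontier Ω)
  have hβ' : 0 < 1 - β := sub_pos.2 hβ
  have hmem {t : ℝ} (ht : t ∈ Ico 0 1) : AffineMap.lineMap x b t ∈ Ω :=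
    lineMap_mem_of_dist_eq_infDist_frontier hΩ hx hxb.symm ht
  have hmaps : MapsTo (AffineMap.lineMap x b) (Icc (0 : ℝ) 1) (closure Ω) := fun t ht => by
    rcases ht.2.lt_or_eq with h | rfl
    · exact subset_closure (hmem ⟨ht.1, h⟩)
    · simpa using frontier_subset_closure hb
  have hpow {t : ℝ} (ht : t ∈ Ico 0 1) : HasDerivAt
      (fun t => A / (1 - β) * (d ^ (1 - β) - ((1 - t) * d) ^ (1 - β)) + C * d * t)
      ((A * ((1 - t) * d) ^ (-β) + C) * d) t := by
    have hbase : (1 - t) * d ≠ 0 := (mul_pos (by linarith [ht.2]) hd).ne'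
    have hrpow := (((hasDerivAt_id' t).const_sub 1).mul_const d).rpow_const (p := 1 - β)
      (Or.inl hbase)
    refine (((hrpow.const_sub (d ^ (1 - β))).const_mul (A / (1 - β))).fun_add
      ((hasDerivAt_id' t).const_mul (C * d))).congr_deriv ?_
    rw [sub_sub_cancel_left]
    field_simp
  have key := image_norm_le_of_norm_deriv_right_le_deriv_boundary' (a := (0 : ℝ)) (b := 1)
    (f := fun t => v (AffineMap.lineMap x b t) - v x)
    (f' := fun t => ⟪g (AffineMap.lineMap x b t), b - x⟫)
    (B := fun t => A / (1 - β) * (d ^ (1 - β) - ((1 - t) * d) ^ (1 - β)) + C * d * t)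
    (B' := fun t => (A * ((1 - t) * d) ^ (-β) + C) * d)
    ((hv.comp (by fun_prop) hmaps).sub continuousOn_const) ?_ (by simp) ?_
    (fun t ht => (hpow ht).hasDerivWithinAt) ?_ (right_mem_Icc.2 zero_le_one)
  · simpa [hv₀ b hb, Real.zero_rpow hβ'.ne'] using key
  · intro t ht
    have := (hasGradientAt_iff_hasFDerivAt.1 (hg _ (hmem ht))).comp_hasDerivAt t
      AffineMap.hasDerivAt_lineMap
    exact ((this.congr_deriv (by simp)).sub_const (v x)).hasDerivWithinAt
  · have : Continuous fun t : ℝ => ((1 - t) * d) ^ (1 - β) :=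
      Continuous.rpow_const (by fun_prop) fun _ => Or.inr hβ'.le
    fun_prop
  · intro t ht
    have hgt := hle _ (hmem ht)
    rw [infDist_lineMap hb hxb.symm (Ico_subset_Icc_self ht)] at hgt
    calc ‖⟪g (AffineMap.lineMap x b t), b - x⟫‖ ≤ ‖g (AffineMap.lineMap x b t)‖ * ‖b - x‖ :=
          norm_inner_le_norm _ _
      _ ≤ (A * ((1 - t) * d) ^ (-β) + C) * d := by
          rw [← dist_eq_norm, dist_comm, ← hxb]
          gcongr

end IntegrationFromFrontier

section Rescaling

variable {E : Type*} [NormedAddCommGroup E] [InnerProductSpace ℝ E] {p β A M q r : ℝ}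

theorem rpow_mul_rpow_neg_le {l s D : ℝ} (hβ₀ : 0 ≤ β) (hβ₁ : β ≤ 1) (hl : 0 < l) (hs : 0 < s)
    (hD : l * s / 2 ≤ D) : l ^ β * D ^ (-β) ≤ 2 * s ^ (-β) :=
  calc l ^ β * D ^ (-β) ≤ l ^ β * (l * s / 2) ^ (-β) := by
        gcongr ?_ * ?_
        exact Real.rpow_le_rpow_of_nonpos (by positivity) hD (by linarith)
    _ = 2 ^ β * s ^ (-β) := by
        rw [Real.div_rpow (by positivity) zero_le_two, Real.mul_rpow hl.le hs.le,
          Real.rpow_neg zero_le_two, Real.rpow_neg hl.le]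
        field_simp
    _ ≤ 2 * s ^ (-β) := by
        gcongr
        exact Real.rpow_le_self_of_one_le one_le_two hβ₁

theorem rpow_sub_one_mul_rpow_one_sub_le {l s D : ℝ} (hβ₀ : 0 ≤ β) (hβ₁ : β ≤ 1) (hl : 0 < l)
    (hs : 0 < s) (hD₀ : 0 ≤ D) (hD : D ≤ 2 * (l * s)) :
    l ^ (β - 1) * D ^ (1 - β) ≤ 2 * s ^ (1 - β) :=
  calc l ^ (β - 1) * D ^ (1 - β) ≤ l ^ (β - 1) * (2 * (l * s)) ^ (1 - β) := by
        gcongr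
    _ = 2 ^ (1 - β) * s ^ (1 - β) := by
        rw [Real.mul_rpow zero_le_two (by positivity), Real.mul_rpow hl.le hs.le,
          ← neg_sub 1 β, Real.rpow_neg hl.le]
        field_simp
    _ ≤ 2 * s ^ (1 - β) := by
        gcongr
        exact Real.rpow_le_self_of_one_le one_le_two (by linarith)

/-- Since `β * p = 1 + β`, the equation `-Δv = |∇v|ᵖ` is invariant under
`v ↦ l ^ (β - 1) * v (l z + b)`. -/
theorem IsApproxSolution.rescale [CompleteSpace E] {U V : Set E} {d d' : E → ℝ} {v : E → ℝ}
    {g : E → E} {h : E → E →L[ℝ] E} {M' l : ℝ} {b : E} (hv : IsApproxSolution U d p β A M v g h)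
    (hβ₀ : 0 ≤ β) (hβ₁ : β ≤ 1) (hβp : β * p = 1 + β) (hA : 0 ≤ A) (hl : 0 < l) (hl₁ : l ≤ 1)
    (hM : l * M ≤ M') (hd' : ∀ z ∈ V, 0 < d' z) (hV : ∀ z ∈ V, l • z + b ∈ U ∧
      l * d' z / 2 ≤ d (l • z + b) ∧ d (l • z + b) ≤ 2 * (l * d' z)) :
    IsApproxSolution V d' p β (2 * A) M' (fun z => l ^ (β - 1) * v (l • z + b))
      (fun z => l ^ β • g (l • z + b)) (fun z => l ^ (1 + β) • h (l • z + b)) where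
  hasGradHessAt z hz := by
    have := (hv.hasGradHessAt _ (hV z hz).1).comp_add_right.comp_smul_right.const_mul (l ^ (β - 1))
    convert this using 1
    · funext y
      rw [smul_smul, ← Real.rpow_add_one hl.ne', sub_add_cancel]
    · rw [smul_smul, ← Real.rpow_natCast, ← Real.rpow_add hl]
      congr 2
      push_cast
      ring
  abs_traceCLM_add_le z hz := by
    have hresidual := hv.abs_traceCLM_add_le _ (hV z hz).1
    have hpow : l ^ (1 + β) ≤ l := by
      simpa using Real.rpow_le_rpow_of_exponent_ge hl hl₁ (show 1 ≤ 1 + β by linarith)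
    rw [map_smul, smul_eq_mul, norm_smul, Real.norm_of_nonneg (by positivity),
      Real.mul_rpow (by positivity) (norm_nonneg _), ← Real.rpow_mul hl.le, hβp, ← mul_add,
      abs_mul, abs_of_nonneg (by positivity)]
    exact (mul_le_mul hpow hresidual (abs_nonneg _) hl.le).trans hM
  norm_le z hz := by
    obtain ⟨hU, hlower, -⟩ := hV z hz
    rw [norm_smul, Real.norm_of_nonneg (by positivity)]
    calc l ^ β * ‖g (l • z + b)‖ ≤ l ^ β * (A * d (l • z + b) ^ (-β)) := by
          gcongr
          exact hv.norm_le _ hU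
      _ = A * (l ^ β * d (l • z + b) ^ (-β)) := by ring
      _ ≤ A * (2 * d' z ^ (-β)) := by
          gcongr A * ?_
          exact rpow_mul_rpow_neg_le hβ₀ hβ₁ hl (hd' z hz) hlower
      _ = 2 * A * d' z ^ (-β) := by ring
  abs_apply_le z hz := by
    obtain ⟨hU, hlower, hupper⟩ := hV z hz
    have hd₀ := hd' z hz
    have hd : 0 ≤ d (l • z + b) := le_trans (by positivity) hlower
    rw [abs_mul, abs_of_nonneg (by positivity)]
    calc l ^ (β - 1) * |v (l • z + b)| ≤ l ^ (β - 1) * (A * d (l • z + b) ^ (1 - β)) := by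
          gcongr
          exact hv.abs_apply_le _ hU
      _ = A * (l ^ (β - 1) * d (l • z + b) ^ (1 - β)) := by ring
      _ ≤ A * (2 * d' z ^ (1 - β)) := by
          gcongr A * ?_
          exact rpow_sub_one_mul_rpow_one_sub_le hβ₀ hβ₁ hl hd₀ hd hupper
      _ = 2 * A * d' z ^ (1 - β) := by ring

end Rescaling

section BoundaryGradient

variable {E : Type*} [NormedAddCommGroup E] [InnerProductSpace ℝ E] [FiniteDimensional ℝ E]
variable {p β A q r : ℝ} {Ω : Set E} {ν : E → E}

theorem IsInwardNormal.exists_smul_add_mem_of_mem_truncHalfSpace (hν : IsInwardNormal Ω r ν)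
    (hr : 0 < r) (hΩ : IsOpen Ω) (hbdd : Bornology.IsBounded Ω) {κ : ℝ} (hκ : 0 < κ) :
    ∃ l₀ > 0, ∀ l ∈ Ioo 0 l₀, ∀ b ∈ frontier Ω, ∀ z ∈ truncHalfSpace (ν b) κ,
      l • z + b ∈ Ω ∧ l * ⟪z, ν b⟫ / 2 ≤ infDist (l • z + b) (frontier Ω) ∧
        infDist (l • z + b) (frontier Ω) ≤ 2 * (l * ⟪z, ν b⟫) := by
  obtain ⟨ρ, hρ, hcone⟩ :=
    hν.exists_mem_and_infDist_bounds hr hΩ hbdd (show 0 < κ ^ 2 by positivity)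
  refine ⟨ρ * κ, by positivity, fun l hl b hb z ⟨hzκ, hzν⟩ => ?_⟩
  obtain ⟨hl₀, hlρ⟩ := hl
  have hznorm : κ * ‖z‖ ≤ 1 := by simpa [hκ.ne'] using mul_le_mul_of_nonneg_left hzκ.le hκ.le
  have hinner : ⟪l • z + b - b, ν b⟫ = l * ⟪z, ν b⟫ := by
    rw [add_sub_cancel_right, real_inner_smul_left]
  have hnorm : ‖l • z + b - b‖ = l * ‖z‖ := by
    rw [add_sub_cancel_right, norm_smul, Real.norm_of_nonneg hl₀.le]
  have := hcone b hb (l • z + b) ?_ ?_ ?_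
  · rwa [hinner] at this
  · rw [hnorm]
    calc l * ‖z‖ ≤ l * κ⁻¹ := by gcongr
      _ < ρ * κ * κ⁻¹ := by gcongr
      _ = ρ := mul_inv_cancel_right₀ hκ.ne' ρ
  · rw [hnorm, hinner]
    calc κ ^ 2 * (l * ‖z‖) = l * κ * (κ * ‖z‖) := by ring
      _ ≤ l * κ * 1 := by gcongr
      _ ≤ l * ⟪z, ν b⟫ := by
          rw [mul_one]
          gcongr
  · rw [hinner]
    have := hκ.trans hzν
    positivity

theorem exists_forall_norm_le_mul_infDist_rpow_of_lt (hν : IsInwardNormal Ω r ν) (hr : 0 < r)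
    (hΩ : IsOpen Ω) (hbdd : Bornology.IsBounded Ω) (hne : (frontier Ω).Nonempty) (hβ₀ : 0 < β)
    (hβ₁ : β < 1) (hβp : β * p = 1 + β) (hA : 0 < A) (hq : β ^ β < q) (M : ℝ) :
    ∃ l₀ > 0, ∀ v g h, IsApproxSolution Ω (fun x => infDist x (frontier Ω)) p β A M v g h →
      ∀ x ∈ Ω, infDist x (frontier Ω) < l₀ → ‖g x‖ ≤ q * infDist x (frontier Ω) ^ (-β) := by
  obtain ⟨κ, hhalf, hκ⟩ := ((eventually_norm_le_halfSpaceApprox (E := E) hβ₀ hβ₁ hβp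
    (show 0 < 2 * A by positivity) hq).and self_mem_nhdsWithin).exists
  obtain ⟨l₁, hl₁, hmem⟩ := hν.exists_smul_add_mem_of_mem_truncHalfSpace hr hΩ hbdd hκ
  refine ⟨min (min l₁ r) (min 1 (κ / (|M| + 1))), by positivity, fun v g h hv x hx hxl => ?_⟩
  obtain ⟨b, hb, hxb⟩ := isClosed_frontier.exists_infDist_eq_dist hne x
  have hl := infDist_frontier_pos hΩ hne hx
  have hproj := hν.eq_add_infDist_smul x hx
  set l := infDist x (frontier Ω)
  obtain ⟨⟨hll₁, hlr⟩, hl1, hlM⟩ : (l < l₁ ∧ l < r) ∧ l < 1 ∧ l < κ / (|M| + 1) := by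
    simpa only [lt_min_iff] using hxl
  have hlM : l * M ≤ κ := by
    rw [lt_div_iff₀ (by positivity)] at hlM
    nlinarith [le_abs_self M]
  have hblow := hv.rescale hβ₀.le hβ₁.le hβp hA.le hl hl1.le hlM
    (fun z hz => hκ.trans hz.2) (hmem l ⟨hl, hll₁⟩ b hb)
  have hgrad := hhalf (ν b) _ _ _ (hν.norm_eq_one b hb) hblow
  rw [add_comm, ← hproj hlr b hb hxb.symm, norm_smul, Real.norm_of_nonneg (by positivity)] at hgrad
  rwa [Real.rpow_neg hl.le, ← div_eq_mul_inv, le_div_iff₀' (by positivity)]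

theorem exists_forall_norm_le_mul_infDist_rpow_add (hν : IsInwardNormal Ω r ν) (hr : 0 < r)
    (hΩ : IsOpen Ω) (hbdd : Bornology.IsBounded Ω) (hne : (frontier Ω).Nonempty) (hβ₀ : 0 < β)
    (hβ₁ : β < 1) (hβp : β * p = 1 + β) (hA : 0 < A) (hq : β ^ β < q) (M : ℝ) :
    ∃ C > 0, ∀ v g h, IsApproxSolution Ω (fun x => infDist x (frontier Ω)) p β A M v g h →
      ∀ x ∈ Ω, ‖g x‖ ≤ q * infDist x (frontier Ω) ^ (-β) + C := by
  obtain ⟨l₀, hl₀, hnear⟩ :=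
    exists_forall_norm_le_mul_infDist_rpow_of_lt hν hr hΩ hbdd hne hβ₀ hβ₁ hβp hA hq M
  refine ⟨A * l₀ ^ (-β), by positivity, fun v g h hv x hx => ?_⟩
  have hd := infDist_frontier_pos hΩ hne hx
  rcases lt_or_ge (infDist x (frontier Ω)) l₀ with hlt | hge
  · have := hnear v g h hv x hx hlt
    have : 0 < A * l₀ ^ (-β) := by positivity
    linarith
  · have hfar : infDist x (frontier Ω) ^ (-β) ≤ l₀ ^ (-β) :=
      Real.rpow_le_rpow_of_nonpos hl₀ hge (by linarith)
    have hq₀ : 0 < q := (Real.rpow_pos_of_pos hβ₀ β).trans hq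
    have : 0 ≤ q * infDist x (frontier Ω) ^ (-β) := by positivity
    linarith [hv.norm_le x hx, mul_le_mul_of_nonneg_left hfar hA.le]

end BoundaryGradient

section ParabolicProblem

theorem pos_and_lt_one_and_mul_eq_of_eq_one_div {p β : ℝ} (hp : 2 < p) (hβ : β = 1 / (p - 1)) :
    0 < β ∧ β < 1 ∧ β * p = 1 + β := by
  have hp₁ : 0 < p - 1 := by linarith
  subst hβ
  refine ⟨by positivity, (div_lt_one hp₁).2 (by linarith), ?_⟩
  field_simp
  ring

theorem exists_forall_norm_le_mul_rpow_neg {X F : Type*} [SeminormedAddCommGroup F]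
    {f : X → ℝ → F} {d : X → ℝ} {s : Set X} {β C₀ D T : ℝ} (hβ : 0 ≤ β)
    (hd : ∀ x ∈ s, 0 < d x) (hD : ∀ x ∈ s, d x ≤ D) (hT : 0 < T)
    (hcont : ∀ x ∈ s, ContinuousWithinAt (f x) (Ioo 0 T) T)
    (hC₀ : ∀ x ∈ s, ∀ t ∈ Ico 0 T, ‖f x t‖ ≤ C₀ * (d x ^ (-β) + 1)) :
    ∃ A > 0, ∀ x ∈ s, ∀ t ∈ Icc 0 T, ‖f x t‖ ≤ A * d x ^ (-β) := by
  refine ⟨|C₀| * (1 + |D ^ β|) + 1, by positivity, fun x hx t ht => ?_⟩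
  have hdx := hd x hx
  have hone : 1 ≤ |D ^ β| * d x ^ (-β) :=
    calc 1 = d x ^ β * d x ^ (-β) := by
          rw [← Real.rpow_add hdx, add_neg_cancel, Real.rpow_zero]
      _ ≤ |D ^ β| * d x ^ (-β) := by
          gcongr
          exact (Real.rpow_le_rpow hdx.le (hD x hx) hβ).trans (le_abs_self _)
  have hclosed : ‖f x t‖ ≤ C₀ * (d x ^ (-β) + 1) := by
    rcases ht.2.lt_or_eq with hlt | rfl
    · exact hC₀ x hx t ⟨ht.1, hlt⟩
    · refine (hcont x hx).norm.closure_le ?_ continuousWithinAt_const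
        fun s hs => hC₀ x hx s (Ioo_subset_Ico_self hs)
      rw [closure_Ioo hT.ne]
      exact right_mem_Icc.2 hT.le
  calc ‖f x t‖ ≤ C₀ * (d x ^ (-β) + 1) := hclosed
    _ ≤ |C₀| * (d x ^ (-β) + |D ^ β| * d x ^ (-β)) := by
        gcongr
        exact le_abs_self C₀
    _ ≤ (|C₀| * (1 + |D ^ β|) + 1) * d x ^ (-β) := by
        have := Real.rpow_nonneg hdx.le (-β)
        linarith

theorem isApproxSolution_infDist_frontier {E : Type*} [NormedAddCommGroup E]
    [InnerProductSpace ℝ E] [FiniteDimensional ℝ E] {p β A M : ℝ} {Ω : Set E} {v : E → ℝ}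
    {g : E → E} {h : E → E →L[ℝ] E} (hΩ : IsOpen Ω) (hne : (frontier Ω).Nonempty) (hβ₀ : 0 ≤ β)
    (hβ₁ : β < 1) (hA : 0 ≤ A) (hv : ContinuousOn v (closure Ω)) (hv₀ : ∀ b ∈ frontier Ω, v b = 0)
    (hg : ∀ x ∈ Ω, HasGradientAt v (g x) x) (hh : ∀ x ∈ Ω, HasFDerivAt g (h x) x)
    (hM : ∀ x ∈ Ω, |traceCLM (h x) + ‖g x‖ ^ p| ≤ M)
    (hle : ∀ x ∈ Ω, ‖g x‖ ≤ A * infDist x (frontier Ω) ^ (-β)) :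
    IsApproxSolution Ω (fun x => infDist x (frontier Ω)) p β (A / (1 - β)) M v g h where
  hasGradHessAt x hx := .of_isOpen hΩ hx hg (hh x hx)
  abs_traceCLM_add_le := hM
  norm_le x hx := (hle x hx).trans <| by
    gcongr ?_ * _
    · exact Real.rpow_nonneg infDist_nonneg _
    · exact le_div_self hA (sub_pos.2 hβ₁) (sub_le_self 1 hβ₀)
  abs_apply_le x hx := by
    simpa using abs_le_mul_infDist_frontier_rpow (C := 0) hΩ hne hβ₁ hv hv₀ hg
      (fun y hy => by simpa using hle y hy) hx

theorem stmt3_general {E : Type*} [NormedAddCommGroup E] [InnerProductSpace ℝ E]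
    [FiniteDimensional ℝ E] [Nontrivial E] {p β r T C₀ M ε : ℝ} {Ω : Set E} {ν : E → E}
    {u : E → ℝ → ℝ} {G : E → ℝ → E} {H : E → ℝ → E →L[ℝ] E}
    (hp : 2 < p) (hβ : β = 1 / (p - 1)) (hΩ : IsOpen Ω) (hbdd : Bornology.IsBounded Ω)
    (hr : 0 < r) (hν : IsInwardNormal Ω r ν) (hT : 0 < T)
    (hu_cont : ∀ t ∈ Icc 0 T, ContinuousOn (fun x => u x t) (closure Ω))
    (hu_bd : ∀ b ∈ frontier Ω, ∀ t ∈ Icc 0 T, u b t = 0)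
    (hG : ∀ t ∈ Icc 0 T, ∀ x ∈ Ω, HasGradientAt (fun y => u y t) (G x t) x)
    (hG_cont : ContinuousOn (fun q : E × ℝ => G q.1 q.2) (closure Ω ×ˢ Ico 0 T))
    (hG_cont_right : ∀ x ∈ Ω, ContinuousWithinAt (G x) (Ioo 0 T) T)
    (hH : ∀ t ∈ Icc (T / 2) T, ∀ x ∈ Ω, HasFDerivAt (fun y => G y t) (H x t) x)
    (hM : ∀ t ∈ Icc (T / 2) T, ∀ x ∈ Ω, |traceCLM (H x t) + ‖G x t‖ ^ p| ≤ M)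
    (hC₀ : ∀ x ∈ Ω, ∀ t ∈ Ico 0 T, ‖G x t‖ ≤ C₀ * (infDist x (frontier Ω) ^ (-β) + 1))
    (hε : 0 < ε) :
    ∃ C > 0, ∀ x ∈ Ω, ∀ t ∈ Icc 0 T,
      ‖G x t‖ ≤ (1 + ε) * β ^ β * infDist x (frontier Ω) ^ (-β) + C ∧
      u x t ≤ (1 + ε) * (β ^ β / (1 - β)) * infDist x (frontier Ω) ^ (1 - β) +
        C * infDist x (frontier Ω) := by
  rcases Ω.eq_empty_or_nonempty with rfl | hΩne
  · exact ⟨1, one_pos, fun x hx => absurd hx (notMem_empty x)⟩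
  obtain ⟨hβ₀, hβ₁, hβp⟩ := pos_and_lt_one_and_mul_eq_of_eq_one_div hp hβ
  have hne := nonempty_frontier_of_isBounded hbdd hΩne
  obtain ⟨D, -, hD⟩ := exists_forall_infDist_le_of_isBounded hbdd (frontier Ω)
  obtain ⟨A, hA, hGA⟩ := exists_forall_norm_le_mul_rpow_neg hβ₀.le
    (fun x hx => infDist_frontier_pos hΩ hne hx) hD hT hG_cont_right hC₀
  obtain ⟨C₁, hC₁, hlate⟩ := exists_forall_norm_le_mul_infDist_rpow_add hν hr hΩ hbdd hne hβ₀ hβ₁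
    hβp (div_pos hA (sub_pos.2 hβ₁))
    (lt_mul_of_one_lt_left (Real.rpow_pos_of_pos hβ₀ β) (lt_add_of_pos_right 1 hε)) M
  obtain ⟨C₂, hearly⟩ := (hbdd.isCompact_closure.prod
    (isCompact_Icc (a := 0) (b := T / 2))).exists_bound_of_continuousOn
    (hG_cont.mono (prod_mono_right (Icc_subset_Ico_right (half_lt_self hT))))
  have hgrad : ∀ t ∈ Icc 0 T, ∀ x ∈ Ω,
      ‖G x t‖ ≤ (1 + ε) * β ^ β * infDist x (frontier Ω) ^ (-β) + (C₁ + |C₂|) := by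
    intro t ht x hx
    rcases le_total t (T / 2) with hle | hge
    · have hbound : ‖G x t‖ ≤ C₂ := hearly (x, t) ⟨subset_closure hx, ht.1, hle⟩
      have : 0 ≤ (1 + ε) * β ^ β * infDist x (frontier Ω) ^ (-β) := by
        have := infDist_nonneg (x := x) (s := frontier Ω)
        positivity
      linarith [le_abs_self C₂]
    · have happrox := isApproxSolution_infDist_frontier hΩ hne hβ₀.le hβ₁ hA.le (hu_cont t ht)
        (fun b hb => hu_bd b hb t ht) (hG t ht) (hH t ⟨hge, ht.2⟩) (hM t ⟨hge, ht.2⟩)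
        fun y hy => hGA y hy t ht
      linarith [hlate _ _ _ happrox x hx, abs_nonneg C₂]
  refine ⟨C₁ + |C₂|, by positivity, fun x hx t ht => ⟨hgrad t ht x hx, ?_⟩⟩
  rw [← mul_div_assoc]
  exact (le_abs_self _).trans <| abs_le_mul_infDist_frontier_rpow hΩ hne hβ₁ (hu_cont t ht)
    (fun b hb => hu_bd b hb t ht) (hG t ht) (hgrad t ht) hx

end ParabolicProblem

theorem stmt3 {n : ℕ} (hn : 1 ≤ n)
    -- the exponents and constants
    (p β cp dp : ℝ) (hp : 2 < p) (hβ : β = 1 / (p - 1))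
    (hcp : cp = β ^ β / (1 - β)) (hdp : dp = β ^ β)
    -- the bounded domain Ω with C² boundary
    (Ω : Set (EuclideanSpace ℝ (Fin n))) (hΩo : IsOpen Ω) (hΩb : Bornology.IsBounded Ω) (hΩc2 : IsC2Boundary Ω)
    -- the distance to the boundary
    (δ : EuclideanSpace ℝ (Fin n) → ℝ) (hδ : ∀ x, δ x = infDist x (frontier Ω))
    -- δ₀ and the boundary neighborhood Ωδ = {x ∈ Ω : δ(x) < δ₀}
    (δ₀ : ℝ) (hδ₀ : 0 < δ₀)
    (Ωδ : Set (EuclideanSpace ℝ (Fin n))) (hΩδ : Ωδ = {x ∈ Ω | δ x < δ₀})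
    -- δ is C² on Ωδ
    (hδC2 : ContDiffOn ℝ 2 δ Ωδ)
    -- every x ∈ Ωδ has a unique nearest boundary point P x
    (P : EuclideanSpace ℝ (Fin n) → EuclideanSpace ℝ (Fin n))
    (hP : ∀ x ∈ Ωδ, P x ∈ frontier Ω ∧ dist x (P x) = δ x ∧
      ∀ b ∈ frontier Ω, dist x b = δ x → b = P x)
    -- interior sphere condition of radius δ₀ at every boundary point
    (hsph : ∀ b ∈ frontier Ω, ∃ y, ball y δ₀ ⊆ Ω ∧ dist y b = δ₀)
    -- the inward unit normal field ν
    (ν : EuclideanSpace ℝ (Fin n) → EuclideanSpace ℝ (Fin n))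
    (hν1 : ∀ b ∈ frontier Ω, ‖ν b‖ = 1 ∧
      ∀ s ∈ Ioo (0 : ℝ) δ₀, b + s • ν b ∈ Ω ∧ δ (b + s • ν b) = s)
    (hν2 : ∀ x ∈ Ωδ, ν x = ν (P x) ∧ HasGradientAt δ (ν x) x)
    -- the solution u on [0,T], with spatial gradient G, spatial Hessian H and
    -- time derivative u'
    (T : ℝ) (hT : 0 < T)
    (u : EuclideanSpace ℝ (Fin n) → ℝ → ℝ)
    (G : EuclideanSpace ℝ (Fin n) → ℝ → EuclideanSpace ℝ (Fin n))
    (H : EuclideanSpace ℝ (Fin n) → ℝ → (EuclideanSpace ℝ (Fin n) →L[ℝ] EuclideanSpace ℝ (Fin n)))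
    (u' : EuclideanSpace ℝ (Fin n) → ℝ → ℝ)
    -- u is continuous on Ω̄ × [0,T] and vanishes on ∂Ω × [0,T]
    (hu_cont : ContinuousOn (fun q : EuclideanSpace ℝ (Fin n) × ℝ => u q.1 q.2) (closure Ω ×ˢ Icc 0 T))
    (hu_bd : ∀ b ∈ frontier Ω, ∀ t ∈ Icc (0 : ℝ) T, u b t = 0)
    -- u is continuously differentiable in x on Ω̄ × [0,T), with spatial gradient G
    (hG : ∀ t ∈ Ico (0 : ℝ) T, ∀ x ∈ closure Ω,
      HasGradientWithinAt (fun y => u y t) (G x t) (closure Ω) x)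
    (hG_cont : ContinuousOn (fun q : EuclideanSpace ℝ (Fin n) × ℝ => G q.1 q.2) (closure Ω ×ˢ Ico 0 T))
    -- on Ω × (0,T], u has spatial gradient G, spatial Hessian H and time derivative u',
    -- all continuous there
    (hG2 : ∀ t ∈ Ioc (0 : ℝ) T, ∀ x ∈ Ω, HasGradientAt (fun y => u y t) (G x t) x)
    (hH : ∀ t ∈ Ioc (0 : ℝ) T, ∀ x ∈ Ω, HasFDerivAt (fun y => G y t) (H x t) x)
    (hu' : ∀ t ∈ Ioc (0 : ℝ) T, ∀ x ∈ Ω, HasDerivAt (fun s => u x s) (u' x t) t)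
    (hreg : ContinuousOn (fun q : EuclideanSpace ℝ (Fin n) × ℝ =>
      (u q.1 q.2, G q.1 q.2, H q.1 q.2, u' q.1 q.2)) (Ω ×ˢ Ioc 0 T))
    -- the PDE uₜ - Δu = |∇u|^p on Ω × (0,T]
    (hPDE : ∀ t ∈ Ioc (0 : ℝ) T, ∀ x ∈ Ω,
      u' x t - ∑ i : Fin n, ⟪H x t (EuclideanSpace.single i (1 : ℝ)),
        EuclideanSpace.single i (1 : ℝ)⟫ = ‖G x t‖ ^ p)
    -- a priori bounds: |uₜ| ≤ M on Ω × [T/2,T] and the Bernstein estimate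
    (M : ℝ) (hM : ∀ x ∈ Ω, ∀ t ∈ Icc (T / 2) T, |u' x t| ≤ M)
    (C₀ : ℝ) (hC₀ : ∀ x ∈ Ω, ∀ t ∈ Ico (0 : ℝ) T, ‖G x t‖ ≤ C₀ * ((δ x) ^ (-β) + 1))
    :
    ∀ ε > 0, ∃ C > 0, ∀ x ∈ Ω, ∀ t ∈ Icc (0 : ℝ) T,
      ‖G x t‖ ≤ (1 + ε) * dp * (δ x) ^ (-β) + C ∧
      u x t ≤ (1 + ε) * cp * (δ x) ^ (1 - β) + C * δ x := by
  obtain rfl : δ = fun x => infDist x (frontier Ω) := funext hδ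
  subst hΩδ hcp hdp
  have : NeZero n := ⟨by omega⟩
  have hν : IsInwardNormal Ω δ₀ ν := .of_hasGradientAt hν1 fun x hx hxδ b hb hxb => by
    rw [(hP x ⟨hx, hxδ⟩).2.2 b hb hxb, ← (hν2 x ⟨hx, hxδ⟩).1]
    exact (hν2 x ⟨hx, hxδ⟩).2
  have hpos {t : ℝ} (ht : t ∈ Icc (T / 2) T) : t ∈ Ioc 0 T := ⟨(half_pos hT).trans_le ht.1, ht.2⟩
  refine fun ε hε => stmt3_general (M := M) hp hβ hΩo hΩb hδ₀ hν hT (fun t ht => ?_)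
    hu_bd (fun t ht x hx => ?_) hG_cont (fun x hx => ?_) (fun t ht => hH t (hpos ht))
    (fun t ht x hx => ?_) hC₀ hε
  · exact hu_cont.uncurry_right (f := u) t ht
  · rcases ht.1.eq_or_lt with rfl | hlt
    · exact hasGradientAt_iff_hasFDerivAt.2 <|
        (hG 0 ⟨le_rfl, hT⟩ x (subset_closure hx)).hasFDerivWithinAt.hasFDerivAt
          (mem_of_superset (hΩo.mem_nhds hx) subset_closure)
    · exact hG2 t ⟨hlt, ht.2⟩ x hx
  · exact ((hreg.snd.fst.uncurry_left (f := G) x hx) T ⟨hT, le_rfl⟩).mono Ioo_subset_Ioc_self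
  · rw [traceCLM_eq_sum_inner (EuclideanSpace.basisFun (Fin n) ℝ), ← hPDE t (hpos ht) x hx]
    simpa [real_inner_comm] using hM x hx t ht
end
end
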